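/- arXiv:2510.09258 — 2 statements merged into one kernel-verified Lean document; each statement's English description precedes it below -/
import Mathlib

section
/- Let N,k ≥ 1 be integers, 0 ≤ γ < 1, p > 1, and ε = 1/(2(N+2)+k). For any p > 1 there exists a constant B > 0 such that: if u0 ∈ C₀(ℝ^{N+k}), u0 ≥ 0, satisfies ∫_{ℝ^{N+k}} u0(x,y)·exp(−ε√(1 + |x|⁴ + |y|²)) dx dy ≥ B, then there is no global nonnegative weak solution u ∈ C([0,∞), C₀(ℝ^{N+k})) of the Grushin heat equation with nonlinear memory u_t − Δ_G u = ∫_0^t (t−s)^{−γ} |u(s)|^{p−1}u(s) ds with initial datum u(·,0) = u0. -/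
open MeasureTheory Real Filter
open scoped ENNReal NNReal

noncomputable section

abbrev Euc (n : ℕ) : Type := EuclideanSpace ℝ (Fin n)

/-- Second derivative of `f` at `z`, taken twice in the direction `v`. -/
def secondDeriv {N k : ℕ} (f : Euc N × Euc k → ℝ) (z v : Euc N × Euc k) : ℝ :=
  fderiv ℝ (fun w => fderiv ℝ f w v) z v

/-- The Laplacian in the `x`-variables. -/
def laplacianX {N k : ℕ} (f : Euc N × Euc k → ℝ) (z : Euc N × Euc k) : ℝ :=
  ∑ i : Fin N, secondDeriv f z (EuclideanSpace.single i 1, 0)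

/-- The Laplacian in the `y`-variables. -/
def laplacianY {N k : ℕ} (f : Euc N × Euc k → ℝ) (z : Euc N × Euc k) : ℝ :=
  ∑ j : Fin k, secondDeriv f z (0, EuclideanSpace.single j 1)

/-- The Grushin operator `Δ_G = Δ_x + |x|² Δ_y`. -/
def grushin {N k : ℕ} (f : Euc N × Euc k → ℝ) (z : Euc N × Euc k) : ℝ :=
  laplacianX f z + ‖z.1‖ ^ 2 * laplacianY f z

/-- The power nonlinearity `|v|^(p-1) · v`. -/
def absPow (p v : ℝ) : ℝ := |v| ^ (p - 1) * v

/-- The Riemann–Liouville fractional integral `I^α_{0|t} f`. -/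
def fracInt (α : ℝ) (f : ℝ → ℝ) (t : ℝ) : ℝ :=
  (1 / Real.Gamma α) * ∫ s in Set.Ioc (0 : ℝ) t, (t - s) ^ (α - 1) * f s


/-- Weak solution on `ℝ^{N+k} × [0,T]` of
`u_t − Δ_G u = ∫_0^t (t−s)^{−γ}|u(s)|^{p−1}u(s) ds`, `u(·,0) = u0` (with `α = 1 − γ`). -/
def IsWeakSolutionMemory (N k : ℕ) (γ p T : ℝ) (u0 : Euc N × Euc k → ℝ)
    (u : Euc N × Euc k → ℝ → ℝ) : Prop :=
  LocallyIntegrableOn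
      (fun q : (Euc N × Euc k) × ℝ => fracInt (1 - γ) (fun s => absPow p (u q.1 s)) q.2)
      (Set.univ ×ˢ Set.Ioo 0 T) volume ∧
  ∀ φ : Euc N × Euc k → ℝ → ℝ,
    ContDiff ℝ 2 (fun q : (Euc N × Euc k) × ℝ => φ q.1 q.2) →
    HasCompactSupport (fun q : (Euc N × Euc k) × ℝ => φ q.1 q.2) →
    (∀ z, φ z T = 0) →
    ((∫ z, u z T * φ z T) - ∫ z, u0 z * φ z 0) =
      Real.Gamma (1 - γ) *
        (∫ t in Set.Ioc (0 : ℝ) T, ∫ z,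
          fracInt (1 - γ) (fun s => absPow p (u z s)) t * φ z t) +
      (∫ t in Set.Ioc (0 : ℝ) T, ∫ z, u z t * grushin (fun w => φ w t) z) +
      (∫ t in Set.Ioc (0 : ℝ) T, ∫ z, u z t * deriv (φ z) t)


lemma key_alg (p : ℝ) (hp : 1 < p) : ∃ C : ℝ, 0 ≤ C ∧ ∃ n : ℕ, ∀ v τ : ℝ, 0 ≤ v → 0 ≤ τ → τ ≤ 1 →
    ((n:ℝ) + 2) * (v * τ ^ n) ≤ v ^ p * τ ^ (n+2) / ((n:ℝ) + 2) + C := by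
  obtain ⟨n, hn⟩ := exists_nat_ge (2 / (p - 1))
  have hp1 : 0 < p - 1 := by linarith
  set q := 2 / (p-1) with hq
  have hq0 : 0 < q := by positivity
  set A : ℝ := (((n:ℝ)+2)^2) ^ (1/(p-1)) with hA
  refine ⟨((n:ℝ)+2) * A, by positivity, n, fun v τ hv hτ hτ1 => ?_⟩
  have hvp : v ^ p = v * v ^ (p-1) := by
    rcases hv.eq_or_lt with h | h
    · rw [← h, Real.zero_rpow (by linarith)]; simp
    · rw [← Real.rpow_one_add' hv (by linarith)]; congr 1; ring
  have hn2 : 0 < (n:ℝ) + 2 := by positivity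
  by_cases h : ((n:ℝ)+2)^2 ≤ v^(p-1) * τ^2
  · have : ((n:ℝ) + 2) * (v * τ ^ n) ≤ v ^ p * τ ^ (n+2) / ((n:ℝ) + 2) := by
      rw [le_div_iff₀ hn2, hvp]
      have : 0 ≤ v * τ^n := by positivity
      calc _ = ((n:ℝ)+2)^2 * (v * τ^n) := by ring
        _ ≤ v^(p-1) * τ^2 * (v * τ^n) := by gcongr
        _ = _ := by ring
    have : 0 ≤ ((n:ℝ)+2) * A := by positivity
    linarith
  · push Not at h
    have h1 : v * τ ^ q ≤ A := by
      have e : (v * τ^q)^(p-1) ≤ ((n:ℝ)+2)^2 := by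
        rw [Real.mul_rpow hv (by positivity), ← Real.rpow_mul hτ, hq, div_mul_cancel₀ _ hp1.ne']
        rw [Real.rpow_two]; exact h.le
      have := Real.rpow_le_rpow (by positivity) e (by positivity : 0 ≤ 1/(p-1))
      rwa [← Real.rpow_mul (by positivity), mul_one_div_cancel hp1.ne', Real.rpow_one] at this
    have h2 : τ ^ n ≤ τ ^ q := by
      rw [← Real.rpow_natCast]
      exact Real.rpow_le_rpow_of_exponent_ge' hτ hτ1 hq0.le hn
    have h3 : v * τ^n ≤ A := le_trans (by gcongr) h1
    have : 0 ≤ v ^ p * τ ^ (n+2) / ((n:ℝ) + 2) := by positivity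
    have := mul_le_mul_of_nonneg_left h3 hn2.le
    linarith

lemma one_dim (p : ℝ) (hp : 1 < p) (C : ℝ) (n : ℕ) 
    (h : ∀ v τ : ℝ, 0 ≤ v → 0 ≤ τ → τ ≤ 1 →
    ((n:ℝ) + 2) * (v * τ ^ n) ≤ v ^ p * τ ^ (n+2) / ((n:ℝ) + 2) + C)
    (v : ℝ → ℝ) (hv : Continuous v) (hv0 : ∀ t, 0 ≤ v t) :
    IntegrableOn (fun t => ((∫ s in Set.Ioc (0:ℝ) t, v s ^ p) * (1-t)^(n+1)
      - v t * ((1-t)^(n+1) + ((n:ℝ)+1) * (1-t)^n))) (Set.Ioc (0:ℝ) 1) ∧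
    -C ≤ ∫ t in Set.Ioc (0:ℝ) 1, ((∫ s in Set.Ioc (0:ℝ) t, v s ^ p) * (1-t)^(n+1)
      - v t * ((1-t)^(n+1) + ((n:ℝ)+1) * (1-t)^n)) := by
  have hvp : Continuous fun t => v t ^ p := hv.rpow_const (fun t => Or.inr (by linarith))
  set G : ℝ → ℝ := fun t => ∫ s in (0:ℝ)..t, v s ^ p with hG
  have hGd : ∀ t, HasDerivAt G (v t ^ p) t := fun t => 
    intervalIntegral.integral_hasDerivAt_right (hvp.intervalIntegrable _ _)
      (hvp.stronglyMeasurableAtFilter _ _) hvp.continuousAt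
  have hGc : Continuous G := continuous_iff_continuousAt.2 fun t => (hGd t).continuousAt
  have e1 : ∫ t in Set.Ioc (0:ℝ) 1, ((∫ s in Set.Ioc (0:ℝ) t, v s ^ p) * (1-t)^(n+1)
      - v t * ((1-t)^(n+1) + ((n:ℝ)+1) * (1-t)^n)) = 
      ∫ t in (0:ℝ)..1, (G t * (1-t)^(n+1) - v t * ((1-t)^(n+1) + ((n:ℝ)+1) * (1-t)^n)) := by
    rw [intervalIntegral.integral_of_le zero_le_one]
    refine setIntegral_congr_fun measurableSet_Ioc fun t ht => ?_
    simp only [hG]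
    rw [intervalIntegral.integral_of_le ht.1.le]
  constructor
  · have hc : Continuous fun t => (G t * (1-t)^(n+1) - v t * ((1-t)^(n+1) + ((n:ℝ)+1) * (1-t)^n)) := by
      fun_prop
    have hi : IntegrableOn _ (Set.Ioc (0:ℝ) 1) := (hc.integrableOn_Icc (μ := volume) (a := 0) (b := 1)).mono_set Set.Ioc_subset_Icc_self
    refine hi.congr_fun (fun t ht => ?_) measurableSet_Ioc
    simp only [hG]
    rw [intervalIntegral.integral_of_le ht.1.le]
  rw [e1]
  set K : ℝ → ℝ := fun t => -(1-t)^(n+2) / ((n:ℝ)+2) with hK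
  have hKd : ∀ t, HasDerivAt K ((1-t)^(n+1)) t := by
    intro t
    have := ((((hasDerivAt_id t).const_sub 1).pow (n+2)).neg).div_const ((n:ℝ)+2)
    refine this.congr_deriv ?_
    have : (n:ℝ) + 2 ≠ 0 := by positivity
    push_cast
    simp
    field_simp
  have ibp := intervalIntegral.integral_mul_deriv_eq_deriv_mul (a := 0) (b := 1) (u := G) (v := K) 
    (fun t _ => hGd t) (fun t _ => hKd t) (hvp.intervalIntegrable _ _) 
    ((by fun_prop : Continuous fun t : ℝ => (1-t)^(n+1)).intervalIntegrable _ _)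
  have hG0 : G 0 = 0 := by simp [hG]
  have hK1 : K 1 = 0 := by simp [hK]
  rw [hG0, hK1] at ibp
  have i1 : IntervalIntegrable (fun t => G t * (1-t)^(n+1)) volume 0 1 := 
    (by fun_prop : Continuous _).intervalIntegrable _ _
  have i2 : IntervalIntegrable (fun t => v t * ((1-t)^(n+1) + ((n:ℝ)+1) * (1-t)^n)) volume 0 1 := 
    (by fun_prop : Continuous _).intervalIntegrable _ _
  have i3 : IntervalIntegrable (fun t => v t ^ p * K t) volume 0 1 := 
    (by fun_prop : Continuous _).intervalIntegrable _ _
  rw [intervalIntegral.integral_sub i1 i2, ibp]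
  have : ∫ t in (0:ℝ)..1, (-C) ≤ ∫ t in (0:ℝ)..1, (-(v t ^ p * K t) - v t * ((1-t)^(n+1) + ((n:ℝ)+1) * (1-t)^n)) := by
    refine intervalIntegral.integral_mono_on zero_le_one (by simp) (i3.neg.sub i2) fun t ht => ?_
    have := h (v t) (1-t) (hv0 t) (by linarith [ht.2]) (by linarith [ht.1])
    have h2 : (1-t)^(n+1) ≤ (1-t)^n := pow_le_pow_of_le_one (by linarith [ht.2]) (by linarith [ht.1]) (by lia)
    have h3 := mul_le_mul_of_nonneg_left h2 (hv0 t)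
    simp only [hK]
    have e : -(v t ^ p * (-(1 - t) ^ (n + 2) / ((n:ℝ) + 2))) = v t ^ p * (1-t) ^ (n+2) / ((n:ℝ) + 2) := by ring
    rw [e]
    nlinarith
  have e3 := intervalIntegral.integral_sub i3.neg i2
  simp only [Pi.neg_apply] at e3
  rw [e3, intervalIntegral.integral_neg] at this
  simpa using this

/-- truncation profile -/
def Ph (v : ℝ) : ℝ := max v 0 - Real.arctan (max v 0)

lemma Ph_deriv (v : ℝ) : HasDerivAt Ph ((max v 0)^2/(1+(max v 0)^2)) v := by
  have key : ∀ w : ℝ, HasDerivAt (fun x => x - Real.arctan x) (w^2/(1+w^2)) w := by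
    intro w
    have := (hasDerivAt_id w).sub (Real.hasDerivAt_arctan w)
    refine this.congr_deriv ?_
    have : 1 + w^2 ≠ 0 := by positivity
    field_simp
    ring
  rcases lt_trichotomy v 0 with h | h | h
  · have : Ph =ᶠ[nhds v] fun _ => 0 := by
      filter_upwards [Iio_mem_nhds h] with x hx
      simp [Ph, max_eq_right (le_of_lt (Set.mem_Iio.1 hx))]
    rw [max_eq_right h.le]
    simpa using (hasDerivAt_const v (0:ℝ)).congr_of_eventuallyEq this
  · subst h
    have h1 : HasDerivWithinAt Ph 0 (Set.Iic 0) 0 := by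
      refine (hasDerivWithinAt_const (0:ℝ) (Set.Iic 0) (0:ℝ)).congr (fun x hx => ?_) (by simp [Ph])
      simp [Ph, max_eq_right (show x ≤ 0 from hx)]
    have h2 : HasDerivWithinAt Ph 0 (Set.Ici 0) 0 := by
      have := (key 0).hasDerivWithinAt (s := Set.Ici 0)
      simp only [ne_eq, OfNat.ofNat_ne_zero, not_false_eq_true, zero_pow, zero_div] at this
      refine this.congr (fun x hx => ?_) (by simp [Ph])
      simp [Ph, max_eq_left (show 0 ≤ x from hx)]
    have := h1.union h2
    rw [Set.Iic_union_Ici] at this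
    simpa using this.hasDerivAt Filter.univ_mem
  · have : Ph =ᶠ[nhds v] fun x => x - Real.arctan x := by
      filter_upwards [Ioi_mem_nhds h] with x hx
      simp [Ph, max_eq_left (le_of_lt (Set.mem_Ioi.1 hx))]
    rw [max_eq_left h.le]
    exact (key v).congr_of_eventuallyEq this

lemma max_sq_deriv (v : ℝ) : HasDerivAt (fun v : ℝ => (max v 0)^2) (2 * max v 0) v := by
  rcases lt_trichotomy v 0 with h | h | h
  · have : (fun v : ℝ => (max v 0)^2) =ᶠ[nhds v] fun _ => 0 := by
      filter_upwards [Iio_mem_nhds h] with x hx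
      simp [max_eq_right (le_of_lt (Set.mem_Iio.1 hx))]
    rw [max_eq_right h.le]
    simpa using (hasDerivAt_const v (0:ℝ)).congr_of_eventuallyEq this
  · subst h
    have h1 : HasDerivWithinAt (fun v : ℝ => (max v 0)^2) 0 (Set.Iic 0) 0 := by
      refine (hasDerivWithinAt_const (0:ℝ) (Set.Iic 0) (0:ℝ)).congr (fun x hx => ?_) (by simp)
      simp [max_eq_right (show x ≤ 0 from hx)]
    have h2 : HasDerivWithinAt (fun v : ℝ => (max v 0)^2) 0 (Set.Ici 0) 0 := by
      have := (hasDerivAt_pow 2 (0:ℝ)).hasDerivWithinAt (s := Set.Ici 0)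
      simp only [Nat.add_one_sub_one, pow_one, mul_zero] at this
      refine this.congr (fun x hx => ?_) (by simp)
      simp [max_eq_left (show 0 ≤ x from hx)]
    have := h1.union h2
    rw [Set.Iic_union_Ici] at this
    simpa using this.hasDerivAt Filter.univ_mem
  · have : (fun v : ℝ => (max v 0)^2) =ᶠ[nhds v] fun x => x^2 := by
      filter_upwards [Ioi_mem_nhds h] with x hx
      simp [max_eq_left (le_of_lt (Set.mem_Ioi.1 hx))]
    rw [max_eq_left h.le]
    simpa using (hasDerivAt_pow 2 v).congr_of_eventuallyEq this

/-- derivative of the profile -/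
def Ph1 (v : ℝ) : ℝ := (max v 0)^2/(1+(max v 0)^2)
/-- second derivative of the profile -/
def Ph2 (v : ℝ) : ℝ := 2 * max v 0/(1+(max v 0)^2)^2

lemma Ph1_deriv (v : ℝ) : HasDerivAt Ph1 (Ph2 v) v := by
  have h : 1 + (max v 0)^2 ≠ 0 := by positivity
  have := (max_sq_deriv v).div ((max_sq_deriv v).const_add 1) h
  refine this.congr_deriv ?_
  unfold Ph2
  field_simp
  ring

lemma Ph_contDiff : ContDiff ℝ 2 Ph := by
  have d1 : deriv Ph = Ph1 := funext fun v => (Ph_deriv v).deriv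
  have d2 : deriv Ph1 = Ph2 := funext fun v => (Ph1_deriv v).deriv
  have c2 : Continuous Ph2 := by
    unfold Ph2
    refine Continuous.div (by fun_prop) (by fun_prop) (fun v => ?_)
    positivity
  have c1 : ContDiff ℝ 1 Ph1 := by
    rw [contDiff_one_iff_deriv]
    exact ⟨fun v => (Ph1_deriv v).differentiableAt, d2 ▸ c2⟩
  rw [show (2 : WithTop ℕ∞) = 1 + 1 by norm_num, contDiff_succ_iff_deriv]
  refine ⟨fun v => (Ph_deriv v).differentiableAt, by simp, d1 ▸ c1⟩

lemma Ph1_nonneg (v : ℝ) : 0 ≤ Ph1 v := by unfold Ph1; positivity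
lemma Ph1_le (v : ℝ) : Ph1 v ≤ 1 := by
  unfold Ph1; rw [div_le_one (by positivity)]; linarith
lemma Ph2_nonneg (v : ℝ) : 0 ≤ Ph2 v := by 
  unfold Ph2
  have : 0 ≤ max v 0 := le_max_right _ _
  positivity
lemma Ph_zero {v : ℝ} (h : v ≤ 0) : Ph v = 0 := by simp [Ph, max_eq_right h]
lemma Ph_nonneg (v : ℝ) : 0 ≤ Ph v := by
  have hm : Monotone Ph := monotone_of_deriv_nonneg (fun v => (Ph_deriv v).differentiableAt)
    (fun v => by rw [(Ph_deriv v).deriv]; positivity)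
  rcases le_total v 0 with h | h
  · rw [Ph_zero h]
  · have := hm h
    rwa [Ph_zero le_rfl] at this
lemma Ph_le (v : ℝ) : Ph v ≤ max v 0 := by
  unfold Ph
  have : 0 ≤ Real.arctan (max v 0) := Real.arctan_nonneg.2 (le_max_right _ _)
  linarith
lemma Ph_ge (v : ℝ) : v - 2 ≤ Ph v := by
  unfold Ph
  have := Real.arctan_lt_pi_div_two (max v 0)
  have := Real.pi_lt_four
  have := le_max_left v 0
  linarith

def PP {N k : ℕ} (z : Euc N × Euc k) : ℝ := 1 + ‖z.1‖ ^ 4 + ‖z.2‖ ^ 2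

lemma PP_pos {N k : ℕ} (z : Euc N × Euc k) : 0 < PP z := by unfold PP; positivity

lemma PP_contDiff {N k : ℕ} : ContDiff ℝ 2 (PP : Euc N × Euc k → ℝ) := by
  have : (PP : Euc N × Euc k → ℝ) = fun z => 1 + (‖z.1‖ ^ 2)^2 + ‖z.2‖ ^ 2 := by
    funext z; unfold PP; ring
  rw [this]
  have h1 : ContDiff ℝ 2 (fun z : Euc N × Euc k => ‖z.1‖^2) := contDiff_fst.norm_sq ℝ
  have h2 : ContDiff ℝ 2 (fun z : Euc N × Euc k => ‖z.2‖^2) := contDiff_snd.norm_sq ℝ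
  exact (contDiff_const.add (h1.pow 2)).add h2

lemma PP_fderiv {N k : ℕ} (z v : Euc N × Euc k) :
    fderiv ℝ PP z v = 4 * ‖z.1‖^2 * inner ℝ z.1 v.1 + 2 * inner ℝ z.2 v.2 := by
  have : (PP : Euc N × Euc k → ℝ) = fun z => 1 + (‖z.1‖ ^ 2)^2 + ‖z.2‖ ^ 2 := by
    funext z; unfold PP; ring
  rw [this]
  have h1 : HasFDerivAt (fun z : Euc N × Euc k => ‖z.1‖^2) _ z := (hasFDerivAt_fst (𝕜 := ℝ) (p := z)).norm_sq
  have h2 : HasFDerivAt (fun z : Euc N × Euc k => ‖z.2‖^2) _ z := (hasFDerivAt_snd (𝕜 := ℝ) (p := z)).norm_sq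
  have := ((h1.pow 2).const_add 1).add h2
  have e := this.fderiv
  have e2 := congrArg (fun L => L v) e
  refine Eq.trans e2 ?_
  simp
  ring

lemma PP_second_x {N k : ℕ} (z : Euc N × Euc k) (i : Fin N) :
    secondDeriv PP z (EuclideanSpace.single i 1, 0) = 4 * ‖z.1‖^2 + 8 * (z.1 i)^2 := by
  unfold secondDeriv
  have : (fun w : Euc N × Euc k => fderiv ℝ PP w (EuclideanSpace.single i 1, 0)) = 
      fun w => 4 * ‖w.1‖^2 * inner ℝ w.1 (EuclideanSpace.single i 1) := by
    funext w; rw [PP_fderiv]; simp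
  rw [this]
  have h1 : HasFDerivAt (fun z : Euc N × Euc k => ‖z.1‖^2) _ z := (hasFDerivAt_fst (𝕜 := ℝ) (p := z)).norm_sq
  have h2 : HasFDerivAt (fun z : Euc N × Euc k => inner ℝ z.1 (EuclideanSpace.single i (1:ℝ))) _ z := 
    (hasFDerivAt_fst (𝕜 := ℝ) (p := z)).inner ℝ (hasFDerivAt_const _ _)
  have e := ((h1.const_mul 4).mul h2).fderiv
  have e2 := congrArg (fun L => L (EuclideanSpace.single i (1:ℝ), (0 : Euc k))) e
  refine Eq.trans e2 ?_
  simp [EuclideanSpace.inner_single_right]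
  ring

lemma PP_second_y {N k : ℕ} (z : Euc N × Euc k) (i : Fin k) :
    secondDeriv PP z (0, EuclideanSpace.single i 1) = 2 := by
  unfold secondDeriv
  have : (fun w : Euc N × Euc k => fderiv ℝ PP w (0, EuclideanSpace.single i 1)) = 
      fun w => 2 * inner ℝ w.2 (EuclideanSpace.single i 1) := by
    funext w; rw [PP_fderiv]; simp
  rw [this]
  have h2 : HasFDerivAt (fun z : Euc N × Euc k => inner ℝ z.2 (EuclideanSpace.single i (1:ℝ))) _ z := 
    (hasFDerivAt_snd (𝕜 := ℝ) (p := z)).inner ℝ (hasFDerivAt_const _ _)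
  have e := (h2.const_mul 2).fderiv
  have e2 := congrArg (fun L => L ((0 : Euc N), EuclideanSpace.single i (1:ℝ))) e
  refine Eq.trans e2 ?_
  simp

lemma secondDeriv_comp {N k : ℕ} (h h1 h2 : ℝ → ℝ) 
    (hh : ∀ s, 0 < s → HasDerivAt h (h1 s) s)
    (hh1 : ∀ s, 0 < s → HasDerivAt h1 (h2 s) s) (z v : Euc N × Euc k) :
    secondDeriv (fun z => h (PP z)) z v = h2 (PP z) * (fderiv ℝ PP z v)^2 + h1 (PP z) * secondDeriv PP z v := by
  have hd : Differentiable ℝ (PP : Euc N × Euc k → ℝ) := PP_contDiff.differentiable (by norm_num)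
  have hd2 : Differentiable ℝ (fun w : Euc N × Euc k => fderiv ℝ PP w v) := by
    have : ContDiff ℝ 1 (fderiv ℝ (PP : Euc N × Euc k → ℝ)) := PP_contDiff.fderiv_right (by norm_num)
    exact (this.clm_apply contDiff_const).differentiable (by norm_num)
  unfold secondDeriv
  have e : (fun w => fderiv ℝ (fun z : Euc N × Euc k => h (PP z)) w v) = fun w => h1 (PP w) * fderiv ℝ PP w v := by
    funext w
    have := (hh (PP w) (PP_pos w)).comp_hasFDerivAt w (hd w).hasFDerivAt
    have e := congrArg (fun L => L v) this.fderiv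
    refine Eq.trans e ?_
    simp
  rw [e]
  have a := (hh1 (PP z) (PP_pos z)).comp_hasFDerivAt z (hd z).hasFDerivAt
  have e := (a.mul (hd2 z).hasFDerivAt).fderiv
  have e2 := congrArg (fun L => L v) e
  refine Eq.trans e2 ?_
  simp
  ring

lemma grushin_comp {N k : ℕ} (h h1 h2 : ℝ → ℝ) 
    (hh : ∀ s, 0 < s → HasDerivAt h (h1 s) s)
    (hh1 : ∀ s, 0 < s → HasDerivAt h1 (h2 s) s) (hpos : ∀ s, 0 < s → 0 ≤ h2 s) (z : Euc N × Euc k) :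
    h1 (PP z) * (2 * (2 * ((N:ℝ) + 2) + k) * ‖z.1‖^2) ≤ grushin (fun z => h (PP z)) z := by
  unfold grushin laplacianX laplacianY
  simp only [secondDeriv_comp h h1 h2 hh hh1, PP_second_x, PP_second_y]
  rw [Finset.sum_add_distrib, Finset.sum_add_distrib, ← Finset.mul_sum, ← Finset.mul_sum,
    ← Finset.mul_sum, ← Finset.mul_sum, Finset.sum_add_distrib, ← Finset.mul_sum, ← Finset.mul_sum]
  have : ∑ i, z.1 i ^ 2 = ‖z.1‖^2 := by
    rw [EuclideanSpace.norm_sq_eq]; simp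
  rw [this]
  have p2 := hpos (PP z) (PP_pos z)
  have q1 : 0 ≤ ∑ i : Fin N, (fderiv ℝ PP z (EuclideanSpace.single i 1, 0))^2 := 
    Finset.sum_nonneg fun i _ => sq_nonneg _
  have q2 : 0 ≤ ∑ i : Fin k, (fderiv ℝ PP z (0, EuclideanSpace.single i 1))^2 := 
    Finset.sum_nonneg fun i _ => sq_nonneg _
  have r1 := mul_nonneg p2 q1
  have r2 := mul_nonneg (sq_nonneg ‖z.1‖) (mul_nonneg p2 q2)
  simp
  linarith

def psi {N k : ℕ} (ε : ℝ) (z : Euc N × Euc k) : ℝ := Real.exp (-ε * √(PP z))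
def ww {N k : ℕ} (ε δ : ℝ) (z : Euc N × Euc k) : ℝ := δ * Ph (psi ε z / δ - 1)

lemma psi_contDiff {N k : ℕ} (ε : ℝ) : ContDiff ℝ 2 (psi ε : Euc N × Euc k → ℝ) := by
  unfold psi
  exact (contDiff_const.mul (PP_contDiff.sqrt (fun z => (PP_pos z).ne'))).exp

lemma ww_contDiff {N k : ℕ} (ε δ : ℝ) : ContDiff ℝ 2 (ww ε δ : Euc N × Euc k → ℝ) := by
  unfold ww
  exact contDiff_const.mul (Ph_contDiff.comp (((psi_contDiff ε).div_const δ).sub contDiff_const))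

lemma psi_pos {N k : ℕ} (ε : ℝ) (z : Euc N × Euc k) : 0 < psi ε z := Real.exp_pos _

lemma ww_nonneg {N k : ℕ} (ε δ : ℝ) (hδ : 0 < δ) (z : Euc N × Euc k) : 0 ≤ ww ε δ z := 
  mul_nonneg hδ.le (Ph_nonneg _)

lemma ww_le {N k : ℕ} (ε δ : ℝ) (hδ : 0 < δ) (z : Euc N × Euc k) : ww ε δ z ≤ psi ε z := by
  have h1 := Ph_le (psi ε z / δ - 1)
  have h2 : max (psi ε z / δ - 1) 0 ≤ psi ε z / δ := max_le (by linarith) (by have := psi_pos ε z; positivity)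
  have := mul_le_mul_of_nonneg_left (h1.trans h2) hδ.le
  rwa [mul_div_cancel₀ _ hδ.ne'] at this

lemma ww_ge {N k : ℕ} (ε δ : ℝ) (hδ : 0 < δ) (z : Euc N × Euc k) : psi ε z - 3 * δ ≤ ww ε δ z := by
  have h1 := Ph_ge (psi ε z / δ - 1)
  have := mul_le_mul_of_nonneg_left h1 hδ.le
  have e : δ * (psi ε z / δ - 1 - 2) = psi ε z - 3 * δ := by field_simp; ring
  rw [e] at this; exact this

lemma norm_le_sqrt {N k : ℕ} (z : Euc N × Euc k) : ‖z‖ ≤ √(PP z) := by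
  refine Real.le_sqrt_of_sq_le ?_
  unfold PP
  rcases max_choice ‖z.1‖ ‖z.2‖ with h | h
  · rw [Prod.norm_def, h]; nlinarith [sq_nonneg (‖z.1‖^2-1), sq_nonneg ‖z.2‖, sq_nonneg ‖z.1‖]
  · rw [Prod.norm_def, h]; nlinarith [sq_nonneg (‖z.1‖^2)]

lemma psi_le {N k : ℕ} (ε : ℝ) (hε : 0 < ε) (z : Euc N × Euc k) : psi ε z ≤ Real.exp (-ε * ‖z‖) := by
  unfold psi
  apply Real.exp_le_exp.2
  have := mul_le_mul_of_nonneg_left (norm_le_sqrt z) hε.le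
  linarith

lemma psi_integrable {N k : ℕ} (ε : ℝ) (hε : 0 < ε) : Integrable (psi ε : Euc N × Euc k → ℝ) := by
  have : (volume : Measure (Euc N × Euc k)).IsAddHaarMeasure :=
    inferInstanceAs (((volume : Measure (Euc N)).prod (volume : Measure (Euc k))).IsAddHaarMeasure)
  set r : ℕ := Module.finrank ℝ (Euc N × Euc k) + 1 with hr
  have hi : Integrable (fun z : Euc N × Euc k => (1 + ‖z‖) ^ (-(r:ℝ))) := 
    integrable_one_add_norm (by rw [hr]; push_cast; linarith)
  obtain ⟨K, hK⟩ : ∃ K : ℝ, ∀ s : ℝ, 0 ≤ s → Real.exp (-ε * s) ≤ K * (1+s)^(-(r:ℝ)) := by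
    refine ⟨(r.factorial : ℝ) / ε^r * Real.exp ε, fun s hs => ?_⟩
    have h1 := Real.pow_div_factorial_le_exp (x := ε * (1+s)) (by positivity) r
    rw [Real.rpow_neg (by positivity), Real.rpow_natCast]
    have e : Real.exp (-ε * s) = Real.exp ε * (Real.exp (ε * (1+s)))⁻¹ := by
      rw [← Real.exp_neg, ← Real.exp_add]; congr 1; ring
    rw [e]
    have h3 : (Real.exp (ε * (1+s)))⁻¹ ≤ ((ε * (1+s))^r / (r.factorial:ℝ))⁻¹ := 
      inv_anti₀ (by positivity) h1
    calc _ ≤ Real.exp ε * ((ε * (1+s))^r / (r.factorial:ℝ))⁻¹ := by gcongr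
      _ = _ := by rw [mul_pow]; field_simp
  refine (hi.const_mul K).mono' (psi_contDiff ε).continuous.aestronglyMeasurable (Filter.Eventually.of_forall fun z => ?_)
  rw [Real.norm_of_nonneg (psi_pos ε z).le]
  exact (psi_le ε hε z).trans (hK _ (norm_nonneg _))

lemma ww_compact {N k : ℕ} (ε δ : ℝ) (hε : 0 < ε) (hδ : 0 < δ) : 
    HasCompactSupport (ww ε δ : Euc N × Euc k → ℝ) := by
  obtain ⟨R, hR⟩ : ∃ R : ℝ, Real.exp (-ε * R) ≤ δ := 
    ⟨- Real.log δ / ε, by rw [show -ε * (-Real.log δ / ε) = Real.log δ by field_simp, Real.exp_log hδ]⟩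
  refine HasCompactSupport.intro (isCompact_closedBall 0 R) fun z hz => ?_
  have hz' : R < ‖z‖ := by simpa using hz
  have : psi ε z ≤ δ := (psi_le ε hε z).trans (le_trans (Real.exp_le_exp.2 (by nlinarith)) hR)
  unfold ww
  rw [Ph_zero, mul_zero]
  have := (div_le_one hδ).2 this
  linarith

lemma grushin_ww {N k : ℕ} (ε δ : ℝ) (hε : 0 < ε) (hδ : 0 < δ) 
    (he : ε * (2 * ((N : ℝ) + 2) + k) = 1) (z : Euc N × Euc k) :
    -psi ε z ≤ grushin (ww ε δ) z := by
  set E : ℝ → ℝ := fun s => Real.exp (-ε * √s) with hE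
  set E1 : ℝ → ℝ := fun s => -(ε/2) * (E s * (√s)⁻¹) with hE1
  set E2 : ℝ → ℝ := fun s => (ε/2) * (ε/2 * (√s)⁻¹^2 + (1/2) * (√s)⁻¹^3) * E s with hE2
  have dE : ∀ s, 0 < s → HasDerivAt E (E1 s) s := by
    intro s hs
    have := ((Real.hasDerivAt_sqrt hs.ne').const_mul (-ε)).exp
    refine this.congr_deriv ?_
    simp only [hE1, hE]
    have := Real.sqrt_pos.2 hs
    field_simp
  have dE1 : ∀ s, 0 < s → HasDerivAt E1 (E2 s) s := by
    intro s hs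
    have h0 := Real.sqrt_pos.2 hs
    have := (((dE s hs).mul ((Real.hasDerivAt_sqrt hs.ne').inv h0.ne')).const_mul (-(ε/2)))
    refine this.congr_deriv ?_
    simp only [hE1, hE2, Pi.inv_apply]
    field_simp
    ring
  have key := grushin_comp (N := N) (k := k) (fun s => δ * Ph (E s / δ - 1)) 
    (fun s => Ph1 (E s / δ - 1) * E1 s)
    (fun s => Ph2 (E s / δ - 1) * (E1 s / δ) * E1 s + Ph1 (E s / δ - 1) * E2 s) ?_ ?_ ?_ z
  · have e : grushin (ww ε δ) z = grushin (fun z => δ * Ph (E (PP z) / δ - 1)) z := rfl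
    rw [e]
    refine le_trans ?_ key
    have h0 := Real.sqrt_pos.2 (PP_pos z)
    have : (2 * (2 * ((N:ℝ) + 2) + k)) = 2 / ε := by field_simp; linarith
    rw [this]
    have hx : ‖z.1‖^2 ≤ √(PP z) := by
      refine Real.le_sqrt_of_sq_le ?_
      unfold PP
      nlinarith [sq_nonneg ‖z.2‖]
    have hx1 : ‖z.1‖^2 * (√(PP z))⁻¹ ≤ 1 := by
      rw [← div_eq_mul_inv]; exact (div_le_one h0).2 hx
    have e2 : Ph1 (E (PP z) / δ - 1) * E1 (PP z) * (2 / ε * ‖z.1‖ ^ 2) = 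
      - (Ph1 (E (PP z) / δ - 1) * (‖z.1‖^2 * (√(PP z))⁻¹) * psi ε z) := by
      simp only [hE1, psi, hE]; field_simp
    rw [e2]
    apply neg_le_neg
    have a := Ph1_nonneg (E (PP z) / δ - 1)
    have b := Ph1_le (E (PP z) / δ - 1)
    have c := psi_pos ε z
    have : Ph1 (E (PP z) / δ - 1) * (‖z.1‖^2 * (√(PP z))⁻¹) ≤ 1 := mul_le_one₀ b (by positivity) hx1
    nlinarith
  · intro s hs
    have := ((Ph_deriv (E s / δ - 1)).comp s (((dE s hs).div_const δ).sub_const 1)).const_mul δ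
    refine this.congr_deriv ?_
    unfold Ph1
    field_simp
  · intro s hs
    have := ((Ph1_deriv (E s / δ - 1)).comp s (((dE s hs).div_const δ).sub_const 1)).mul (dE1 s hs)
    exact this
  · intro s hs
    have a := Ph1_nonneg (E s / δ - 1)
    have b := Ph2_nonneg (E s / δ - 1)
    have : 0 ≤ E2 s := by simp only [hE2, hE]; positivity
    have : Ph2 (E s / δ - 1) * (E1 s / δ) * E1 s = Ph2 (E s / δ - 1) * (E1 s ^2/ δ) := by ring
    rw [this]
    positivity

lemma second_cont {N k : ℕ} (f : Euc N × Euc k → ℝ) (hf : ContDiff ℝ 2 f) (v : Euc N × Euc k) :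
    Continuous fun z => secondDeriv f z v := by
  have : ContDiff ℝ 1 (fderiv ℝ f) := hf.fderiv_right (by norm_num)
  have h2 : ContDiff ℝ 1 (fun w => fderiv ℝ f w v) := this.clm_apply contDiff_const
  have := h2.continuous_fderiv (by norm_num)
  exact this.clm_apply continuous_const

lemma second_compact {N k : ℕ} (f : Euc N × Euc k → ℝ) (hf : HasCompactSupport f) (v : Euc N × Euc k) :
    HasCompactSupport fun z => secondDeriv f z v := by
  unfold secondDeriv
  exact (hf.fderiv_apply ℝ v).fderiv_apply ℝ v

lemma grushin_cont {N k : ℕ} (f : Euc N × Euc k → ℝ) (hf : ContDiff ℝ 2 f) :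
    Continuous fun z => grushin f z := by
  unfold grushin laplacianX laplacianY
  have := second_cont f hf
  refine (continuous_finsetSum _ fun i _ => this _).add (Continuous.mul (by fun_prop) (continuous_finsetSum _ fun i _ => this _))

lemma grushin_compact {N k : ℕ} (f : Euc N × Euc k → ℝ) (hf : HasCompactSupport f) :
    HasCompactSupport fun z => grushin f z := by
  refine HasCompactSupport.intro hf fun z hz => ?_
  have : ∀ v, secondDeriv f z v = 0 := by
    intro v
    have h1 : tsupport (fun z => secondDeriv f z v) ⊆ tsupport f := by
      unfold secondDeriv
      exact (tsupport_fderiv_apply_subset ℝ v).trans (tsupport_fderiv_apply_subset ℝ v)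
    exact image_eq_zero_of_notMem_tsupport (f := fun z => secondDeriv f z v) (fun h => hz (h1 h))
  simp [grushin, laplacianX, laplacianY, this]

lemma grushin_const_mul {N k : ℕ} (c : ℝ) (f : Euc N × Euc k → ℝ) (z : Euc N × Euc k) (hf : ContDiff ℝ 2 f) :
    grushin (fun w => c * f w) z = c * grushin f z := by
  have : ∀ v, secondDeriv (fun w => c * f w) z v = c * secondDeriv f z v := by
    intro v
    unfold secondDeriv
    have h1 : Differentiable ℝ f := hf.differentiable (by norm_num)
    have h2 : ContDiff ℝ 1 (fderiv ℝ f) := hf.fderiv_right (by norm_num)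
    have h3 : Differentiable ℝ (fun w => fderiv ℝ f w v) := (h2.clm_apply contDiff_const).differentiable (by norm_num)
    have : (fun w => fderiv ℝ (fun w => c * f w) w v) = fun w => c * fderiv ℝ f w v := by
      funext w; rw [fderiv_const_mul (h1 w)]; simp
    rw [this, fderiv_const_mul (h3 z)]; simp
  simp only [grushin, laplacianX, laplacianY, this, ← Finset.mul_sum]
  ring

lemma frac_bounds (γ p M : ℝ) (hγ0 : 0 ≤ γ) (hγ1 : γ < 1) (hp : 1 < p) (f v : ℝ → ℝ) (hv : Continuous v) 
    (hv0 : ∀ t, 0 ≤ v t) (hvM : ∀ t, v t ≤ M) (t : ℝ) (ht : t ∈ Set.Ioc (0:ℝ) 1)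
    (hf : ∀ s ∈ Set.Ioc (0:ℝ) 1, f s = v s) :
    (∫ s in Set.Ioc (0:ℝ) t, v s ^ p) ≤ Real.Gamma (1-γ) * fracInt (1-γ) (fun s => absPow p (f s)) t ∧
    Real.Gamma (1-γ) * fracInt (1-γ) (fun s => absPow p (f s)) t ≤ M^p / (1-γ) := by
  have hΓ : Real.Gamma (1-γ) ≠ 0 := (Real.Gamma_pos_of_pos (by linarith)).ne'
  have hvp : Continuous fun t => v t ^ p := hv.rpow_const (fun t => Or.inr (by linarith))
  have e : Real.Gamma (1-γ) * fracInt (1-γ) (fun s => absPow p (f s)) t = 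
      ∫ s in Set.Ioc (0:ℝ) t, (t-s)^(-γ) * v s ^ p := by
    unfold fracInt
    rw [← mul_assoc, mul_one_div_cancel hΓ, one_mul]
    refine setIntegral_congr_fun measurableSet_Ioc fun s hs => ?_
    have h1 := hf s ⟨hs.1, hs.2.trans ht.2⟩
    have h2 : absPow p (f s) = v s ^ p := by
      rw [h1]; unfold absPow
      rw [abs_of_nonneg (hv0 s)]
      rcases (hv0 s).eq_or_lt with h | h
      · rw [← h, mul_zero, Real.zero_rpow (by linarith)]
      · rw [← Real.rpow_add_one h.ne']; congr 1; ring
    simp only [h2]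
    congr 2; ring
  rw [e]
  have hk : IntervalIntegrable (fun s => (t-s)^(-γ)) volume 0 t := by
    have := (intervalIntegral.intervalIntegrable_rpow' (a := 0) (b := t) (r := -γ) (by linarith)).comp_sub_left t
    simpa using this.symm
  have hk' : IntegrableOn (fun s => (t-s)^(-γ)) (Set.Ioc 0 t) := (intervalIntegrable_iff_integrableOn_Ioc_of_le ht.1.le).1 hk
  have hvi : IntegrableOn (fun s => v s ^ p) (Set.Ioc 0 t) := 
    (hvp.integrableOn_Icc (μ := volume) (a := 0) (b := t)).mono_set Set.Ioc_subset_Icc_self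
  have hM0 : 0 ≤ M := (hv0 0).trans (hvM 0)
  have hb : ∀ s, v s ^ p ≤ M ^ p := fun s => Real.rpow_le_rpow (hv0 s) (hvM s) (by linarith)
  have hkv : IntegrableOn (fun s => (t-s)^(-γ) * v s ^ p) (Set.Ioc 0 t) := by
    refine hk'.mul_bdd (c := M^p) hvp.aestronglyMeasurable (Filter.Eventually.of_forall fun s => ?_)
    rw [Real.norm_of_nonneg (Real.rpow_nonneg (hv0 s) _)]; exact hb s
  constructor
  · rw [integral_Ioc_eq_integral_Ioo, integral_Ioc_eq_integral_Ioo]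
    refine setIntegral_mono_on (hvi.mono_set Set.Ioo_subset_Ioc_self) (hkv.mono_set Set.Ioo_subset_Ioc_self)
      measurableSet_Ioo fun s hs => ?_
    have : 1 ≤ (t-s)^(-γ) := Real.one_le_rpow_of_pos_of_le_one_of_nonpos (by linarith [hs.2]) (by linarith [hs.1, ht.2]) (by linarith)
    have h0 := Real.rpow_nonneg (hv0 s) p
    nlinarith
  · calc _ ≤ ∫ s in Set.Ioc (0:ℝ) t, (t-s)^(-γ) * M ^ p := by
          refine setIntegral_mono_on hkv (hk'.mul_const _) measurableSet_Ioc fun s hs => ?_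
          have : 0 ≤ (t-s)^(-γ) := Real.rpow_nonneg (by linarith [hs.2]) _
          exact mul_le_mul_of_nonneg_left (hb s) this
      _ = t^(1-γ)/(1-γ) * M^p := by
          rw [integral_mul_const, ← intervalIntegral.integral_of_le ht.1.le]
          have : ∫ s in (0:ℝ)..t, (t-s)^(-γ) = ∫ s in (0:ℝ)..t, s^(-γ) := by
            have := intervalIntegral.integral_comp_sub_left (a := 0) (b := t) (fun s : ℝ => s^(-γ)) t
            simpa using this
          rw [this, integral_rpow (Or.inl (by linarith))]
          rw [Real.zero_rpow (by linarith)]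
          ring_nf
      _ ≤ 1/(1-γ) * M^p := by
          have : 0 < 1 - γ := by linarith
          gcongr
          exact Real.rpow_le_one ht.1.le ht.2 this.le
      _ = _ := by ring

lemma step {N k : ℕ} (γ p : ℝ) (hγ0 : 0 ≤ γ) (hγ1 : γ < 1) (hp : 1 < p) (ε δ : ℝ) (hε : 0 < ε) (hδ : 0 < δ) 
    (he : ε * (2 * ((N : ℝ) + 2) + k) = 1) (C : ℝ) (n : ℕ) 
    (hC : ∀ v τ : ℝ, 0 ≤ v → 0 ≤ τ → τ ≤ 1 →
    ((n:ℝ) + 2) * (v * τ ^ n) ≤ v ^ p * τ ^ (n+2) / ((n:ℝ) + 2) + C)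
    (u0 : Euc N × Euc k → ℝ) (u v : Euc N × Euc k → ℝ → ℝ) (M : ℝ)
    (hv : Continuous (fun q : (Euc N × Euc k) × ℝ => v q.1 q.2)) (hv0 : ∀ z t, 0 ≤ v z t)
    (hvM : ∀ z t, v z t ≤ M) (huv : ∀ z, ∀ t ∈ Set.Ioc (0:ℝ) 1, u z t = v z t)
    (hw : ∀ T : ℝ, 0 < T → IsWeakSolutionMemory N k γ p T u0 u) :
    ∫ z, u0 z * ww ε δ z ≤ C * (∫ z : Euc N × Euc k, ww ε δ z) + M * ∫ z : Euc N × Euc k, (psi ε z - ww ε δ z) := by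
  set S : Set ((Euc N × Euc k) × ℝ) := Set.univ ×ˢ Set.Ioc (0:ℝ) 1 with hS
  have hSm : MeasurableSet S := MeasurableSet.univ.prod measurableSet_Ioc
  set ν : Measure ℝ := volume.restrict (Set.Ioc (0:ℝ) 1) with hν
  have hprod : (volume : Measure ((Euc N × Euc k) × ℝ)).restrict S = (volume : Measure (Euc N × Euc k)).prod ν := by
    rw [hν, hS, Measure.volume_eq_prod, ← Measure.prod_restrict, Measure.restrict_univ]
  have hzc : ∀ z, Continuous (v z) := fun z => hv.comp (by fun_prop : Continuous fun t : ℝ => (z, t))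
  have hM0 : 0 ≤ M := (hv0 0 0).trans (hvM 0 0)
  set A : Euc N × Euc k → ℝ → ℝ := fun z t => Real.Gamma (1-γ) * fracInt (1-γ) (fun s => absPow p (u z s)) t with hA
  have hAb : ∀ z, ∀ t ∈ Set.Ioc (0:ℝ) 1, (∫ s in Set.Ioc (0:ℝ) t, v z s ^ p) ≤ A z t ∧ A z t ≤ M^p/(1-γ) := 
    fun z t ht => frac_bounds γ p M hγ0 hγ1 hp (u z) (v z) (hzc z) (hv0 z) (hvM z) t ht (huv z)
  have hG0 : ∀ z t, 0 ≤ ∫ s in Set.Ioc (0:ℝ) t, v z s ^ p := fun z t => 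
    integral_nonneg fun s => Real.rpow_nonneg (hv0 z s) _
  have hAm : AEStronglyMeasurable (fun q : (Euc N × Euc k) × ℝ => A q.1 q.2) (volume.restrict S) := by
    have h1 := (hw 2 (by norm_num)).1.aestronglyMeasurable
    have hsub : S ⊆ Set.univ ×ˢ Set.Ioo (0:ℝ) 2 :=
      fun q hq => ⟨Set.mem_univ _, ⟨hq.2.1, lt_of_le_of_lt hq.2.2 one_lt_two⟩⟩
    have h2 : AEStronglyMeasurable (fun q : (Euc N × Euc k) × ℝ => fracInt (1 - γ) (fun s => absPow p (u q.1 s)) q.2)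
      (volume.restrict S) := h1.mono_measure (Measure.restrict_mono hsub le_rfl)
    exact h2.const_mul _
  set g : Euc N × Euc k → ℝ := grushin (ww ε δ) with hg
  set w : Euc N × Euc k → ℝ := ww ε δ with hwdef
  have wC : ContDiff ℝ 2 w := ww_contDiff ε δ
  have wc : Continuous w := wC.continuous
  have wK : HasCompactSupport w := ww_compact ε δ hε hδ
  have gc : Continuous g := grushin_cont _ wC
  have gK : HasCompactSupport g := grushin_compact _ wK
  have wi : Integrable w := wc.integrable_of_hasCompactSupport wK
  have gi : Integrable g := gc.integrable_of_hasCompactSupport gK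
  have ψi : Integrable (psi ε : Euc N × Euc k → ℝ) := psi_integrable ε hε
  have w0 : ∀ z, 0 ≤ w z := ww_nonneg ε δ hδ
  have wψ : ∀ z, w z ≤ psi ε z := ww_le ε δ hδ
  have gψ : ∀ z, -psi ε z ≤ g z := grushin_ww ε δ hε hδ he
  set f1 : (Euc N × Euc k) × ℝ → ℝ := fun q => A q.1 q.2 * ((1-q.2)^(n+1) * w q.1) with hf1
  set f2 : (Euc N × Euc k) × ℝ → ℝ := fun q => v q.1 q.2 * ((1-q.2)^(n+1) * g q.1) with hf2
  set f3 : (Euc N × Euc k) × ℝ → ℝ := fun q => v q.1 q.2 * (-(((n:ℝ)+1) * (1-q.2)^n) * w q.1) with hf3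
  have hmem : ∀ᵐ q : (Euc N × Euc k) × ℝ ∂(volume.restrict S), q.2 ∈ Set.Ioc (0:ℝ) 1 := 
    ae_restrict_of_forall_mem hSm fun q hq => hq.2
  have hfst : ∀ (h : Euc N × Euc k → ℝ), Integrable h → 
      Integrable (fun q : (Euc N × Euc k) × ℝ => h q.1) (volume.restrict S) := by
    intro h hh
    rw [hprod]
    exact hh.comp_fst ν
  have pw : ∀ t ∈ Set.Ioc (0:ℝ) 1, ∀ m : ℕ, 0 ≤ (1-t)^m ∧ (1-t)^m ≤ 1 := fun t ht m => 
    ⟨pow_nonneg (by linarith [ht.2]) _, pow_le_one₀ (by linarith [ht.2]) (by linarith [ht.1])⟩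
  have i1 : Integrable f1 (volume.restrict S) := by
    refine (hfst _ (wi.const_mul (M^p/(1-γ)))).mono' (hAm.mul (by fun_prop : Continuous _).aestronglyMeasurable) ?_
    filter_upwards [hmem] with q hq
    obtain ⟨a1, a2⟩ := hAb q.1 q.2 hq
    obtain ⟨b1, b2⟩ := pw q.2 hq (n+1)
    have a0 : 0 ≤ A q.1 q.2 := (hG0 _ _).trans a1
    have c0 := w0 q.1
    rw [Real.norm_of_nonneg (by positivity)]
    have : (1 - q.2) ^ (n + 1) * w q.1 ≤ w q.1 := mul_le_of_le_one_left c0 b2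
    exact mul_le_mul a2 this (by positivity) (a0.trans a2)
  have i2 : Integrable f2 (volume.restrict S) := by
    refine (hfst _ (gi.norm.const_mul M)).mono' (by fun_prop : Continuous _).aestronglyMeasurable ?_
    filter_upwards [hmem] with q hq
    obtain ⟨b1, b2⟩ := pw q.2 hq (n+1)
    rw [norm_mul, norm_mul, Real.norm_of_nonneg (hv0 _ _), Real.norm_of_nonneg b1]
    exact mul_le_mul (hvM _ _) (mul_le_of_le_one_left (norm_nonneg _) b2) (by positivity) hM0
  have i3 : Integrable f3 (volume.restrict S) := by
    refine (hfst _ ((wi.norm.const_mul ((n:ℝ)+1)).const_mul M)).mono' (by fun_prop : Continuous _).aestronglyMeasurable ?_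
    filter_upwards [hmem] with q hq
    obtain ⟨b1, b2⟩ := pw q.2 hq n
    have b3 : 0 ≤ ((n:ℝ)+1) * (1-q.2)^n := by positivity
    rw [norm_mul, norm_mul, Real.norm_of_nonneg (hv0 _ _), norm_neg, Real.norm_of_nonneg b3]
    refine mul_le_mul (hvM _ _) ?_ (by positivity) hM0
    refine mul_le_mul_of_nonneg_right ?_ (norm_nonneg _)
    exact mul_le_of_le_one_right (by positivity) b2
  -- the test function
  let β : ContDiffBump (0:ℝ) := ⟨2, 3, by norm_num, by norm_num⟩
  set c : ℝ → ℝ := fun t => β t * (1-t)^(n+1) with hc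
  have hcC : ContDiff ℝ 2 c := β.contDiff.mul ((contDiff_const.sub contDiff_id).pow _)
  have hc1 : ∀ t ∈ Set.Icc (0:ℝ) 1, c t = (1-t)^(n+1) := by
    intro t ht
    have : β t = 1 := β.one_of_mem_closedBall (by 
      rw [Real.closedBall_eq_Icc]; constructor <;> simp only [β] <;> linarith [ht.1, ht.2])
    simp only [hc, this, one_mul]
  have hcd : ∀ t ∈ Set.Ioc (0:ℝ) 1, deriv c t = -(((n:ℝ)+1) * (1-t)^n) := by
    intro t ht
    have : c =ᶠ[nhds t] fun t => (1-t)^(n+1) := by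
      filter_upwards [Ioo_mem_nhds (show -1 < t by linarith [ht.1]) (show t < 2 by linarith [ht.2])] with s hs
      have : β s = 1 := β.one_of_mem_closedBall (by 
        rw [Real.closedBall_eq_Icc]; constructor <;> simp only [β] <;> linarith [hs.1, hs.2])
      simp only [hc, this, one_mul]
    rw [this.deriv_eq]
    have := ((hasDerivAt_id t).const_sub 1).pow (n+1)
    have e := this.deriv
    refine Eq.trans e ?_
    simp
  have hφ := (hw 1 one_pos).2 (fun z t => c t * w z) ?_ ?_ ?_
  rotate_left
  · exact (hcC.comp contDiff_snd).mul (wC.comp contDiff_fst)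
  · refine HasCompactSupport.intro (wK.isCompact.prod (isCompact_closedBall (0:ℝ) 3)) fun q hq => ?_
    rw [Set.mem_prod, not_and_or] at hq
    rcases hq with h | h
    · simp only [image_eq_zero_of_notMem_tsupport h, mul_zero]
    · have : β q.2 = 0 := β.zero_of_le_dist (by
        simp only [Metric.mem_closedBall, not_le] at h; exact h.le)
      simp only [hc, this, zero_mul]
  · intro z
    simp only [hc1 1 (by simp), sub_self]
    simp
  have hc0 : c 0 = 1 := by rw [hc1 0 (by simp)]; simp
  have hc11 : c 1 = 0 := by rw [hc1 1 (by simp)]; simp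
  simp only [hc0, hc11, zero_mul, mul_zero, integral_zero, one_mul, zero_sub] at hφ
  have q1 : Real.Gamma (1 - γ) *
        (∫ t in Set.Ioc (0 : ℝ) 1, ∫ z,
          fracInt (1 - γ) (fun s => absPow p (u z s)) t * (c t * w z)) = ∫ q, f1 q ∂(volume.restrict S) := by
    rw [hprod, integral_prod_symm _ (hprod ▸ i1), ← integral_const_mul]
    refine setIntegral_congr_fun measurableSet_Ioc fun t ht => ?_
    simp only [hf1, hA]
    rw [← integral_const_mul, hc1 t ⟨ht.1.le, ht.2⟩]
    simp only [mul_assoc]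
  have q2 : (∫ t in Set.Ioc (0 : ℝ) 1, ∫ z, u z t * grushin (fun z => c t * w z) z) = ∫ q, f2 q ∂(volume.restrict S) := by
    rw [hprod, integral_prod_symm _ (hprod ▸ i2)]
    refine setIntegral_congr_fun measurableSet_Ioc fun t ht => ?_
    simp only [hf2]
    refine integral_congr_ae (Filter.Eventually.of_forall fun z => ?_)
    simp only [grushin_const_mul _ w z wC, huv z t ht, hc1 t ⟨ht.1.le, ht.2⟩, hg]
  have q3 : (∫ t in Set.Ioc (0 : ℝ) 1, ∫ z, u z t * deriv (fun t => c t * w z) t) = ∫ q, f3 q ∂(volume.restrict S) := by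
    rw [hprod, integral_prod_symm _ (hprod ▸ i3)]
    refine setIntegral_congr_fun measurableSet_Ioc fun t ht => ?_
    simp only [hf3]
    refine integral_congr_ae (Filter.Eventually.of_forall fun z => ?_)
    have : deriv (fun t => c t * w z) t = deriv c t * w z := deriv_mul_const_field _
    simp only [this, huv z t ht, hcd t ht]
  rw [q1, q2, q3, ← integral_add i1 i2] at hφ
  have i123 : Integrable (fun q => f1 q + f2 q + f3 q) (volume.restrict S) := (i1.add i2).add i3
  have hsum : (∫ q, (f1 q + f2 q) ∂(volume.restrict S)) + ∫ q, f3 q ∂(volume.restrict S) = 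
      ∫ q, (f1 q + f2 q + f3 q) ∂(volume.restrict S) := (integral_add (i1.add i2) i3).symm
  rw [hsum, hprod] at hφ
  rw [hprod] at i123
  rw [integral_prod _ i123] at hφ
  have di : Integrable (fun z => psi ε z - w z) := ψi.sub wi
  have low : ∫ z, (-C * w z - M * (psi ε z - w z)) ≤ ∫ z, ∫ t, (f1 (z,t) + f2 (z,t) + f3 (z,t)) ∂ν := by
    refine integral_mono_ae ((wi.const_mul _).sub (di.const_mul _)) i123.integral_prod_left ?_
    filter_upwards [i123.prod_right_ae] with z hz
    obtain ⟨o1, o2⟩ := one_dim p hp C n hC (v z) (hzc z) (hv0 z)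
    set L : ℝ → ℝ := fun t => ((∫ s in Set.Ioc (0:ℝ) t, v z s ^ p) * (1-t)^(n+1)
      - v z t * ((1-t)^(n+1) + ((n:ℝ)+1) * (1-t)^n)) with hL
    have oi : Integrable (fun t => w z * L t - M * (psi ε z - w z)) ν := 
      (Integrable.const_mul o1 _).sub (integrable_const _)
    have ev : ∫ t, (w z * L t - M * (psi ε z - w z)) ∂ν = w z * (∫ t, L t ∂ν) - M * (psi ε z - w z) := by
      rw [integral_sub (Integrable.const_mul o1 _) (integrable_const _), integral_const_mul]
      simp [hν]
    have := mul_le_mul_of_nonneg_left o2 (w0 z)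
    calc -C * w z - M * (psi ε z - w z) ≤ w z * (∫ t, L t ∂ν) - M * (psi ε z - w z) := by linarith
      _ = _ := ev.symm
      _ ≤ _ := by
        refine integral_mono_ae oi hz ?_
        refine ae_restrict_of_forall_mem measurableSet_Ioc fun t ht => ?_
        obtain ⟨b1, b2⟩ := pw t ht (n+1)
        obtain ⟨a1, a2⟩ := hAb z t ht
        have k1 := mul_le_mul_of_nonneg_right a1 (mul_nonneg b1 (w0 z))
        have k2 := mul_le_mul_of_nonneg_left (gψ z) (mul_nonneg (hv0 z t) b1)
        have k3 : v z t * (1-t)^(n+1) * (psi ε z - w z) ≤ M * (psi ε z - w z) := by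
          refine mul_le_mul_of_nonneg_right ?_ (by linarith [wψ z])
          exact (mul_le_of_le_one_right (hv0 z t) b2).trans (hvM z t)
        simp only [hL, hf1, hf2, hf3]
        linarith
  rw [integral_sub (wi.const_mul _) (di.const_mul _), integral_const_mul, integral_const_mul] at low
  rw [← hφ] at low
  linarith

lemma d_tendsto {N k : ℕ} (ε : ℝ) (hε : 0 < ε) :
    Tendsto (fun m : ℕ => ∫ z : Euc N × Euc k, (psi ε z - ww ε (1/((m:ℝ)+1)) z)) atTop (nhds 0) := by
  have h0 : (0:ℝ) = ∫ z : Euc N × Euc k, (0:ℝ) := by simp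
  rw [h0]
  have hδ : ∀ m : ℕ, 0 < 1/((m:ℝ)+1) := fun m => by positivity
  refine tendsto_integral_of_dominated_convergence (psi ε) (fun m => ?_) (psi_integrable ε hε) (fun m => ?_) ?_
  · exact ((psi_contDiff ε).continuous.sub (ww_contDiff ε _).continuous).aestronglyMeasurable
  · refine Filter.Eventually.of_forall fun z => ?_
    have a := ww_le ε _ (hδ m) z
    have b := ww_nonneg ε _ (hδ m) z
    rw [Real.norm_of_nonneg (by linarith)]; linarith
  · refine Filter.Eventually.of_forall fun z => ?_
    have t1 : Tendsto (fun m : ℕ => 3 * (1/((m:ℝ)+1))) atTop (nhds 0) := by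
      simpa using (tendsto_one_div_add_atTop_nhds_zero_nat (𝕜 := ℝ)).const_mul 3
    refine squeeze_zero (fun m => ?_) (fun m => ?_) t1
    · linarith [ww_le ε _ (hδ m) z]
    · linarith [ww_ge ε _ (hδ m) z]

/-- **Remark (nonexistence for large initial data).**
Let `0 ≤ γ < 1`, `p > 1`, and `ε = 1/(2(N+2)+k)`. There is a constant `B > 0` such that,
if `u0 ∈ C₀(ℝ^{N+k})`, `u0 ≥ 0`, satisfies
`∫ u0(x,y) exp(−ε√(1+|x|⁴+|y|²)) dxdy ≥ B`, then there is no global nonnegative weak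
solution in `C([0,∞), C₀(ℝ^{N+k}))` of
`u_t − Δ_G u = ∫_0^t (t−s)^{−γ}|u|^{p−1}u(s) ds`, `u(·,0) = u0`. -/
theorem no_global_weak_solution_memory_large_data (N k : ℕ) (hN : 1 ≤ N) (hk : 1 ≤ k)
    (γ p : ℝ) (hγ0 : 0 ≤ γ) (hγ1 : γ < 1) (hp : 1 < p) :
    ∃ B : ℝ, 0 < B ∧
      ∀ u0 : Euc N × Euc k → ℝ, Continuous u0 →
        Tendsto u0 (cocompact (Euc N × Euc k)) (nhds 0) → (∀ z, 0 ≤ u0 z) →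
        B ≤ (∫ z : Euc N × Euc k,
              u0 z * Real.exp (-(1 / (2 * ((N : ℝ) + 2) + k)) *
                Real.sqrt (1 + ‖z.1‖ ^ 4 + ‖z.2‖ ^ 2))) →
        ¬ ∃ u : Euc N × Euc k → ℝ → ℝ,
            (∀ z : Euc N × Euc k, ∀ t : ℝ, 0 ≤ t → 0 ≤ u z t) ∧
            (∃ U : ℝ → ZeroAtInftyContinuousMap (Euc N × Euc k) ℝ,
              ContinuousOn U (Set.Ici 0) ∧ ∀ t ∈ Set.Ici (0 : ℝ), ∀ z, U t z = u z t) ∧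
            (∀ T : ℝ, 0 < T → IsWeakSolutionMemory N k γ p T u0 u) := by
  set ε : ℝ := 1 / (2 * ((N : ℝ) + 2) + k) with hεd
  have hε : 0 < ε := by positivity
  have he : ε * (2 * ((N : ℝ) + 2) + k) = 1 := by
    rw [hεd]; exact one_div_mul_cancel (by positivity)
  obtain ⟨C, hC0, n, hC⟩ := key_alg p hp
  have ψ0 : 0 ≤ ∫ z : Euc N × Euc k, psi ε z := integral_nonneg fun z => (psi_pos ε z).le
  refine ⟨C * (∫ z : Euc N × Euc k, psi ε z) + 1, by positivity, ?_⟩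
  intro u0 hu0c hu0t hu00 hB
  rintro ⟨u, hu, ⟨U, hUc, hU⟩, hw⟩
  have hB' : C * (∫ z : Euc N × Euc k, psi ε z) + 1 ≤ ∫ z : Euc N × Euc k, u0 z * psi ε z := hB
  -- bound on u0
  obtain ⟨M0, hM0⟩ : ∃ M0 : ℝ, ∀ z, u0 z ≤ M0 := by
    let F : ZeroAtInftyContinuousMap (Euc N × Euc k) ℝ := ⟨⟨u0, hu0c⟩, hu0t⟩
    exact ⟨‖F.toBCF‖, fun z => (le_abs_self _).trans (F.toBCF.norm_coe_le_norm z)⟩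
  -- clamped solution
  set cl : ℝ → ℝ := fun t => max 0 (min 1 t) with hcl
  have hclc : Continuous cl := by fun_prop
  have hcl0 : ∀ t, cl t ∈ Set.Icc (0:ℝ) 1 := fun t => ⟨le_max_left _ _, max_le zero_le_one (min_le_left _ _)⟩
  have hUcl : Continuous fun t => U (cl t) := hUc.comp_continuous hclc fun t => (hcl0 t).1
  have hUb : Continuous fun t => (U (cl t)).toBCF :=
    (ZeroAtInftyContinuousMap.isometry_toBCF).continuous.comp hUcl
  set v : Euc N × Euc k → ℝ → ℝ := fun z t => U (cl t) z with hv
  have hvc : Continuous (fun q : (Euc N × Euc k) × ℝ => v q.1 q.2) := by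
    have := (hUb.comp continuous_snd).eval (continuous_fst (X := Euc N × Euc k) (Y := ℝ))
    exact this
  have hv0 : ∀ z t, 0 ≤ v z t := fun z t => by
    simp only [hv]
    rw [hU (cl t) (hcl0 t).1 z]; exact hu z _ (hcl0 t).1
  obtain ⟨M, hM⟩ : ∃ M : ℝ, ∀ z t, v z t ≤ M := by
    obtain ⟨M, hM⟩ := (isCompact_Icc (a := (0:ℝ)) (b := 1)).exists_bound_of_continuousOn hUb.continuousOn
    refine ⟨M, fun z t => ?_⟩
    have h1 := hM (cl t) (hcl0 t)
    have h2 : cl (cl t) = cl t := by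
      have := hcl0 t
      simp only [hcl] at this ⊢
      rw [min_eq_right this.2, max_eq_right this.1]
    rw [h2] at h1
    exact ((le_abs_self _).trans ((U (cl t)).toBCF.norm_coe_le_norm z)).trans h1
  have huv : ∀ z, ∀ t ∈ Set.Ioc (0:ℝ) 1, u z t = v z t := by
    intro z t ht
    have : cl t = t := by simp only [hcl]; rw [min_eq_right ht.2, max_eq_right ht.1.le]
    simp only [hv, this]
    exact (hU t ht.1.le z).symm
  have ψi : Integrable (psi ε : Euc N × Euc k → ℝ) := psi_integrable ε hε
  have main : ∀ m : ℕ, C * (∫ z : Euc N × Euc k, psi ε z) + 1 ≤ C * (∫ z : Euc N × Euc k, psi ε z) +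
      (M + M0) * ∫ z : Euc N × Euc k, (psi ε z - ww ε (1/((m:ℝ)+1)) z) := by
    intro m
    have hδ : 0 < 1/((m:ℝ)+1) := by positivity
    have wi : Integrable (ww ε (1/((m:ℝ)+1)) : Euc N × Euc k → ℝ) :=
      (ww_contDiff ε _).continuous.integrable_of_hasCompactSupport (ww_compact ε _ hε hδ)
    have s := step γ p hγ0 hγ1 hp ε _ hε hδ he C n hC u0 u v M hvc hv0 hM huv hw
    have s1 : ∫ z : Euc N × Euc k, ww ε (1/((m:ℝ)+1)) z ≤ ∫ z : Euc N × Euc k, psi ε z :=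
      integral_mono wi ψi fun z => ww_le ε _ hδ z
    have s2 := mul_le_mul_of_nonneg_left s1 hC0
    have ub : ∀ᵐ z : Euc N × Euc k, ‖u0 z‖ ≤ M0 := Filter.Eventually.of_forall fun z => by
      rw [Real.norm_of_nonneg (hu00 z)]; exact hM0 z
    have j1 : Integrable (fun z => u0 z * ww ε (1/((m:ℝ)+1)) z) := wi.bdd_mul hu0c.aestronglyMeasurable ub
    have j2 : Integrable (fun z => u0 z * (psi ε z - ww ε (1/((m:ℝ)+1)) z)) :=
      (ψi.sub wi).bdd_mul hu0c.aestronglyMeasurable ub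
    have s3 : ∫ z, u0 z * psi ε z = (∫ z, u0 z * ww ε (1/((m:ℝ)+1)) z) +
        ∫ z, u0 z * (psi ε z - ww ε (1/((m:ℝ)+1)) z) := by
      rw [← integral_add j1 j2]
      congr 1; funext z; ring
    have s4 : ∫ z, u0 z * (psi ε z - ww ε (1/((m:ℝ)+1)) z) ≤
        M0 * ∫ z : Euc N × Euc k, (psi ε z - ww ε (1/((m:ℝ)+1)) z) := by
      rw [← integral_const_mul]
      refine integral_mono j2 ((ψi.sub wi).const_mul _) fun z => ?_
      exact mul_le_mul_of_nonneg_right (hM0 z) (by linarith [ww_le ε _ hδ z])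
    linarith
  have lim := ((d_tendsto (N := N) (k := k) ε hε).const_mul (M + M0)).const_add
    (C * (∫ z : Euc N × Euc k, psi ε z))
  have := ge_of_tendsto' lim main
  linarith
end
end

section
/- Let N,k ≥ 1 be integers, 0 ≤ γ < 1, p > 1, T > 0, and ε = 1/(2(N+2)+k). Let Θ(z) = c·exp(−ε√(1 + |x|⁴ + |y|²)) with c > 0 chosen so that ∫_{ℝ^{N+k}} Θ(z) dz = 1. Suppose u ∈ C([0,T], C₀(ℝ^{N+k})), u ≥ 0, is a weak solution on ℝ^{N+k} × [0,T] of u_t − Δ_G u = ∫_0^t (t−s)^{−γ}|u(s)|^{p−1}u(s) ds with nonnegative initial datum u0 ∈ C₀(ℝ^{N+k}). Then the function f(t) = ∫_{ℝ^{N+k}} u(z,t)Θ(z) dz belongs to C¹([0,T]) and satisfies f'(t) + f(t) ≥ ∫_0^t (t−s)^{−γ} f(s)^p ds for all t ∈ [0,T]. -/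
open MeasureTheory Real Filter
open scoped ENNReal NNReal

noncomputable section

/-- The weight `Θ(z) = c · exp(−ε √(1 + |x|⁴ + |y|²))` with `ε = 1/(2(N+2)+k)`. -/
def Theta (N k : ℕ) (c : ℝ) (z : Euc N × Euc k) : ℝ :=
  c * Real.exp (-(1 / (2 * ((N : ℝ) + 2) + k)) * Real.sqrt (1 + ‖z.1‖ ^ 4 + ‖z.2‖ ^ 2))

/-- The quasi-norm. -/
def rho {N k : ℕ} (z : Euc N × Euc k) : ℝ := Real.sqrt (1 + ‖z.1‖ ^ 4 + ‖z.2‖ ^ 2)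

def coefA {N k : ℕ} (z : Euc N × Euc k) : ℝ :=
  (4 * ‖z.1‖ ^ 6 + ‖z.1‖ ^ 2 * ‖z.2‖ ^ 2) / rho z ^ 2

def coefB {N k : ℕ} (z : Euc N × Euc k) : ℝ :=
  (2 * ((N : ℝ) + 2) + k) * ‖z.1‖ ^ 2 / rho z
    - (4 * ‖z.1‖ ^ 6 + ‖z.1‖ ^ 2 * ‖z.2‖ ^ 2) / rho z ^ 3

lemma rho_sq {N k : ℕ} (z : Euc N × Euc k) : rho z ^ 2 = 1 + ‖z.1‖ ^ 4 + ‖z.2‖ ^ 2 :=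
  Real.sq_sqrt (by positivity)

lemma one_le_rho {N k : ℕ} (z : Euc N × Euc k) : 1 ≤ rho z := by
  unfold rho
  apply Real.one_le_sqrt.2
  have : 0 ≤ ‖z.1‖ ^ 4 := by positivity
  have : 0 ≤ ‖z.2‖ ^ 2 := by positivity
  linarith

lemma sq_le_rho {N k : ℕ} (z : Euc N × Euc k) : ‖z.1‖ ^ 2 ≤ rho z := by
  apply Real.le_sqrt_of_sq_le
  nlinarith [sq_nonneg ‖z.2‖]

lemma norm_le_rho {N k : ℕ} (z : Euc N × Euc k) : ‖z‖ ≤ rho z := by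
  have h1 := one_le_rho z
  have h2 := sq_le_rho z
  have h3 := rho_sq z
  rw [Prod.norm_def]
  apply max_le
  · nlinarith [norm_nonneg z.1]
  · have : 0 ≤ ‖z.1‖ ^ 4 := by positivity
    nlinarith [norm_nonneg z.2]

lemma contDiff_rho {N k : ℕ} {n : ℕ∞} : ContDiff ℝ n (rho : Euc N × Euc k → ℝ) := by
  unfold rho
  apply ContDiff.sqrt
  · have h1 : ContDiff ℝ n (fun z : Euc N × Euc k => ‖z.1‖ ^ 2) := contDiff_fst.norm_sq ℝ
    have h2 : ContDiff ℝ n (fun z : Euc N × Euc k => ‖z.2‖ ^ 2) := contDiff_snd.norm_sq ℝ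
    have : (fun z : Euc N × Euc k => 1 + ‖z.1‖ ^ 4 + ‖z.2‖ ^ 2)
      = fun z => 1 + (‖z.1‖ ^ 2) ^ 2 + ‖z.2‖ ^ 2 := by
      funext z; ring
    rw [this]
    fun_prop
  · intro z
    positivity

lemma continuous_rho {N k : ℕ} : Continuous (rho : Euc N × Euc k → ℝ) :=
  (contDiff_rho (n := 0)).continuous

lemma coefA_nonneg {N k : ℕ} (z : Euc N × Euc k) : 0 ≤ coefA z := by
  unfold coefA; positivity

lemma num_le {N k : ℕ} (z : Euc N × Euc k) :
    4 * ‖z.1‖ ^ 6 + ‖z.1‖ ^ 2 * ‖z.2‖ ^ 2 ≤ 4 * rho z ^ 3 := by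
  have h1 := one_le_rho z
  have h2 := sq_le_rho z
  have h3 := rho_sq z
  have : ‖z.1‖ ^ 2 * (rho z ^ 2) ≤ rho z * rho z ^ 2 := by gcongr
  have h4 : 0 ≤ ‖z.1‖ ^ 2 * ‖z.2‖ ^ 2 := by positivity
  have h5 : 0 ≤ ‖z.1‖ ^ 2 := by positivity
  rw [h3] at this
  nlinarith

lemma coefA_le {N k : ℕ} (z : Euc N × Euc k) : coefA z ≤ 4 * rho z := by
  have h1 := one_le_rho z
  unfold coefA
  rw [div_le_iff₀ (by positivity)]
  nlinarith [num_le z]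

lemma coefB_le {N k : ℕ} (z : Euc N × Euc k) : coefB z ≤ 2 * ((N : ℝ) + 2) + k := by
  have h1 := one_le_rho z
  unfold coefB
  have : 0 ≤ (4 * ‖z.1‖ ^ 6 + ‖z.1‖ ^ 2 * ‖z.2‖ ^ 2) / rho z ^ 3 := by positivity
  have h2 : (2 * ((N : ℝ) + 2) + k) * ‖z.1‖ ^ 2 / rho z ≤ 2 * ((N : ℝ) + 2) + k := by
    rw [div_le_iff₀ (by positivity)]
    have := sq_le_rho z
    gcongr
  linarith

lemma coefB_ge {N k : ℕ} (z : Euc N × Euc k) : -4 ≤ coefB z := by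
  have h1 := one_le_rho z
  unfold coefB
  have : (4 * ‖z.1‖ ^ 6 + ‖z.1‖ ^ 2 * ‖z.2‖ ^ 2) / rho z ^ 3 ≤ 4 := by
    rw [div_le_iff₀ (by positivity)]
    exact num_le z
  have h2 : 0 ≤ (2 * ((N : ℝ) + 2) + k) * ‖z.1‖ ^ 2 / rho z := by positivity
  linarith

lemma continuous_coefA {N k : ℕ} : Continuous (coefA : Euc N × Euc k → ℝ) := by
  unfold coefA
  have := continuous_rho (N := N) (k := k)
  refine Continuous.div (by fun_prop) (by fun_prop) (fun z => ?_)
  have := one_le_rho z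
  positivity

lemma continuous_coefB {N k : ℕ} : Continuous (coefB : Euc N × Euc k → ℝ) := by
  unfold coefB
  have := continuous_rho (N := N) (k := k)
  refine Continuous.sub (Continuous.div (by fun_prop) (by fun_prop) (fun z => ?_))
    (Continuous.div (by fun_prop) (by fun_prop) (fun z => ?_)) <;>
  · have := one_le_rho z
    positivity

lemma fderiv_eq_of_line {N k : ℕ} {f : Euc N × Euc k → ℝ} {z v : Euc N × Euc k} {d : ℝ}
    (hf : DifferentiableAt ℝ f z) (h : HasDerivAt (fun s : ℝ => f (z + s • v)) d 0) :
    fderiv ℝ f z v = d := by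
  rw [← hf.lineDeriv_eq_fderiv]
  exact HasLineDerivAt.lineDeriv h

lemma normsq_line {n : ℕ} (x : Euc n) (i : Fin n) (s : ℝ) :
    ‖x + s • EuclideanSpace.single i (1 : ℝ)‖ ^ 2 = ‖x‖ ^ 2 + 2 * s * x i + s ^ 2 := by
  rw [norm_add_sq_real, norm_smul, inner_smul_right, EuclideanSpace.inner_single_right]
  simp
  ring

lemma sum_sq {n : ℕ} (x : Euc n) : ∑ i, x i ^ 2 = ‖x‖ ^ 2 := by
  rw [EuclideanSpace.norm_sq_eq]
  simp

lemma normsq_hasDeriv {n : ℕ} (x : Euc n) (i : Fin n) :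
    HasDerivAt (fun s : ℝ => ‖x + s • EuclideanSpace.single i (1 : ℝ)‖ ^ 2) (2 * x i) 0 := by
  have e : (fun s : ℝ => ‖x + s • EuclideanSpace.single i (1 : ℝ)‖ ^ 2) =
      fun s => ‖x‖ ^ 2 + 2 * s * x i + s ^ 2 := funext fun s => normsq_line x i s
  rw [e]
  have h := (((hasDerivAt_id (0 : ℝ)).const_mul 2).mul_const (x i)).const_add (‖x‖ ^ 2) |>.add
    ((hasDerivAt_id (0 : ℝ)).pow 2)
  refine (h.congr_deriv ?_)
  simp

lemma coord_hasDeriv {n : ℕ} (x : Euc n) (i : Fin n) :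
    HasDerivAt (fun s : ℝ => (x + s • EuclideanSpace.single i (1 : ℝ)) i) 1 0 := by
  have h := (hasDerivAt_id (0 : ℝ)).const_add (x i)
  have e : (fun s : ℝ => (x + s • EuclideanSpace.single i (1 : ℝ)) i) = fun s => x i + s := by
    funext s
    simp
  rw [e]
  exact h

lemma rho_line_x {N k : ℕ} (z : Euc N × Euc k) (i : Fin N) :
    HasDerivAt (fun s : ℝ => rho (z + s • ((EuclideanSpace.single i (1 : ℝ) : Euc N), (0 : Euc k))))
      (2 * ‖z.1‖ ^ 2 * z.1 i / rho z) 0 := by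
  have h := (((normsq_hasDeriv z.1 i).pow 2).const_add 1).add_const (‖z.2‖ ^ 2)
  have h2 := h.sqrt (by simp only [Pi.pow_apply]; positivity)
  have e : (fun s : ℝ => rho (z + s • ((EuclideanSpace.single i (1 : ℝ) : Euc N), (0 : Euc k)))) =
      fun s : ℝ => √(1 + (‖z.1 + s • EuclideanSpace.single i (1 : ℝ)‖ ^ 2) ^ 2 + ‖z.2‖ ^ 2) := by
    funext s
    simp only [rho, Prod.fst_add, Prod.smul_fst, Prod.snd_add, Prod.smul_snd, smul_zero, add_zero]
    congr 1
    ring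
  rw [e]
  refine h2.congr_deriv ?_
  · have : rho z = √(1 + (‖z.1‖ ^ 2) ^ 2 + ‖z.2‖ ^ 2) := by
      unfold rho; congr 1; ring
    simp only [Pi.pow_apply, zero_smul, add_zero]
    rw [← this]
    have := one_le_rho z
    field_simp
    ring

lemma rho_line_y {N k : ℕ} (z : Euc N × Euc k) (i : Fin k) :
    HasDerivAt (fun s : ℝ => rho (z + s • ((0 : Euc N), (EuclideanSpace.single i (1 : ℝ) : Euc k))))
      (z.2 i / rho z) 0 := by
  have h := (normsq_hasDeriv z.2 i).const_add (1 + ‖z.1‖ ^ 4)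
  have h2 := h.sqrt (by positivity)
  have e : (fun s : ℝ => rho (z + s • ((0 : Euc N), (EuclideanSpace.single i (1 : ℝ) : Euc k)))) =
      fun s : ℝ => √(1 + ‖z.1‖ ^ 4 + ‖z.2 + s • EuclideanSpace.single i (1 : ℝ)‖ ^ 2) := by
    funext s
    simp only [rho, Prod.fst_add, Prod.smul_fst, Prod.snd_add, Prod.smul_snd, smul_zero, add_zero]
  rw [e]
  refine h2.congr_deriv ?_
  · have : rho z = √(1 + ‖z.1‖ ^ 4 + ‖z.2‖ ^ 2) := rfl
    simp only [zero_smul, add_zero]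
    rw [← this]
    have := one_le_rho z
    field_simp

lemma secondDeriv_x {N k : ℕ} (g g1 g2 : ℝ → ℝ) (h1 : ∀ r, HasDerivAt g (g1 r) r)
    (h2 : ∀ r, HasDerivAt g1 (g2 r) r) (z : Euc N × Euc k) (i : Fin N) :
    secondDeriv (fun w => g (rho w)) z (EuclideanSpace.single i 1, 0) =
      g2 (rho z) * (4 * ‖z.1‖ ^ 4 * z.1 i ^ 2 / rho z ^ 2) +
      g1 (rho z) * ((4 * z.1 i ^ 2 + 2 * ‖z.1‖ ^ 2) / rho z
        - 4 * ‖z.1‖ ^ 4 * z.1 i ^ 2 / rho z ^ 3) := by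
  have hr : Differentiable ℝ (rho : Euc N × Euc k → ℝ) :=
    (contDiff_rho (n := 1)).differentiable (by simp)
  have hg : Differentiable ℝ g := fun r => (h1 r).differentiableAt
  have hg1 : Differentiable ℝ g1 := fun r => (h2 r).differentiableAt
  have hr0 : ∀ z : Euc N × Euc k, rho z ≠ 0 := fun z => by
    have := one_le_rho z
    positivity
  have hns : Differentiable ℝ (fun z : Euc N × Euc k => ‖z.1‖ ^ 2) :=
    (contDiff_fst.norm_sq ℝ (n := 1)).differentiable (by simp)
  have e1 : (fun w : Euc N × Euc k => fderiv ℝ (fun w => g (rho w)) w (EuclideanSpace.single i 1, 0))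
      = fun w => g1 (rho w) * (2 * ‖w.1‖ ^ 2 * w.1 i / rho w) := by
    funext w
    apply fderiv_eq_of_line (hg.comp hr w)
    have := rho_line_x w i
    have h := (HasDerivAt.comp (0 : ℝ) (h₂ := g) (h₂' := g1 (rho w)) (by simpa using h1 (rho w)) this)
    exact h
  unfold secondDeriv
  rw [e1]
  apply fderiv_eq_of_line
  · simp_rw [div_eq_mul_inv]
    refine DifferentiableAt.mul (hg1.comp hr z) (DifferentiableAt.mul ?_ ((hr z).fun_inv (hr0 z)))
    refine ((hns z).const_mul 2).mul ?_
    fun_prop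
  · have hl := rho_line_x z i
    have ha := (HasDerivAt.comp (0 : ℝ) (h₂ := g1) (h₂' := g2 (rho z)) (by simpa using h2 (rho z)) hl)
    have hb := ((((normsq_hasDeriv z.1 i).const_mul 2).mul (coord_hasDeriv z.1 i)).div hl
      (by simpa using hr0 z))
    have hc := ha.mul hb
    refine hc.congr_deriv ?_
    have := hr0 z
    simp [show z + (0, 0) = z from add_zero z]
    field_simp
    ring

lemma secondDeriv_y {N k : ℕ} (g g1 g2 : ℝ → ℝ) (h1 : ∀ r, HasDerivAt g (g1 r) r)
    (h2 : ∀ r, HasDerivAt g1 (g2 r) r) (z : Euc N × Euc k) (i : Fin k) :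
    secondDeriv (fun w => g (rho w)) z (0, EuclideanSpace.single i 1) =
      g2 (rho z) * (z.2 i ^ 2 / rho z ^ 2) +
      g1 (rho z) * (1 / rho z - z.2 i ^ 2 / rho z ^ 3) := by
  have hr : Differentiable ℝ (rho : Euc N × Euc k → ℝ) :=
    (contDiff_rho (n := 1)).differentiable (by simp)
  have hg : Differentiable ℝ g := fun r => (h1 r).differentiableAt
  have hg1 : Differentiable ℝ g1 := fun r => (h2 r).differentiableAt
  have hr0 : ∀ z : Euc N × Euc k, rho z ≠ 0 := fun z => by
    have := one_le_rho z
    positivity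
  have e1 : (fun w : Euc N × Euc k => fderiv ℝ (fun w => g (rho w)) w (0, EuclideanSpace.single i 1))
      = fun w => g1 (rho w) * (w.2 i / rho w) := by
    funext w
    apply fderiv_eq_of_line (hg.comp hr w)
    have := rho_line_y w i
    have h := (HasDerivAt.comp (0 : ℝ) (h₂ := g) (h₂' := g1 (rho w)) (by simpa using h1 (rho w)) this)
    exact h
  unfold secondDeriv
  rw [e1]
  apply fderiv_eq_of_line
  · simp_rw [div_eq_mul_inv]
    refine DifferentiableAt.mul (hg1.comp hr z) (DifferentiableAt.mul ?_ ((hr z).fun_inv (hr0 z)))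
    fun_prop
  · have hl := rho_line_y z i
    have ha := (HasDerivAt.comp (0 : ℝ) (h₂ := g1) (h₂' := g2 (rho z)) (by simpa using h2 (rho z)) hl)
    have hb := ((coord_hasDeriv z.2 i).div hl (by simpa using hr0 z))
    have hc := ha.mul hb
    refine hc.congr_deriv ?_
    have := hr0 z
    simp [show z + (0, 0) = z from add_zero z]
    field_simp

lemma grushin_radial {N k : ℕ} (g g1 g2 : ℝ → ℝ) (h1 : ∀ r, HasDerivAt g (g1 r) r)
    (h2 : ∀ r, HasDerivAt g1 (g2 r) r) (z : Euc N × Euc k) :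
    grushin (fun w => g (rho w)) z = g2 (rho z) * coefA z + g1 (rho z) * coefB z := by
  have hr0 : rho z ≠ 0 := by
    have := one_le_rho z
    positivity
  unfold grushin laplacianX laplacianY
  simp_rw [secondDeriv_x g g1 g2 h1 h2, secondDeriv_y g g1 g2 h1 h2]
  simp only [Finset.sum_add_distrib, ← Finset.mul_sum, Finset.sum_sub_distrib, ← Finset.sum_div,
    sum_sq, Finset.sum_const, Finset.card_univ, Fintype.card_fin, nsmul_eq_mul]
  unfold coefA coefB
  field_simp
  ring

lemma integrable_rho_exp {N k : ℕ} (ε : ℝ) (hε : 0 < ε) :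
    Integrable (fun z : Euc N × Euc k => rho z * Real.exp (-ε * rho z)) volume := by
  have : (volume : Measure (Euc N × Euc k)).IsAddHaarMeasure :=
    inferInstanceAs (((volume : Measure (Euc N)).prod (volume : Measure (Euc k))).IsAddHaarMeasure)
  set n : ℕ := Module.finrank ℝ (Euc N × Euc k) with hn
  have h := integrable_one_add_norm (E := Euc N × Euc k) (μ := volume) (r := (n : ℝ) + 1)
    (by linarith)
  obtain ⟨C, hC⟩ : ∃ C : ℝ, ∀ r : ℝ, 1 ≤ r → r * Real.exp (-ε * r) * (1 + r) ^ (n + 1) ≤ C := by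
    refine ⟨(2 ^ (n + 1)) * ((n + 2).factorial / ε ^ (n + 2)), fun r hr => ?_⟩
    have h1 := Real.pow_div_factorial_le_exp (ε * r) (by positivity) (n + 2)
    have h2 : (1 + r) ^ (n + 1) ≤ (2 * r) ^ (n + 1) := by gcongr; linarith
    calc r * Real.exp (-ε * r) * (1 + r) ^ (n + 1)
        ≤ r * Real.exp (-ε * r) * (2 * r) ^ (n + 1) := by gcongr
      _ = 2 ^ (n + 1) * (r ^ (n + 2) * Real.exp (-ε * r)) := by ring
      _ ≤ _ := by
        gcongr
        rw [neg_mul, Real.exp_neg, ← div_eq_mul_inv, div_le_div_iff₀ (by positivity) (by positivity)]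
        rw [div_le_iff₀ (by positivity), mul_pow] at h1
        linarith
  refine (h.const_mul C).mono' ?_ ?_
  · have := continuous_rho (N := N) (k := k)
    exact Continuous.aestronglyMeasurable (by fun_prop)
  · refine Eventually.of_forall fun z => ?_
    have h1 := one_le_rho z
    have h2 := norm_le_rho z
    rw [Real.norm_of_nonneg (by positivity), Real.rpow_neg (by positivity), ← div_eq_mul_inv,
      le_div_iff₀ (by positivity)]
    refine le_trans ?_ (hC _ h1)
    rw [show ((n : ℝ) + 1) = ((n + 1 : ℕ) : ℝ) by push_cast; ring, Real.rpow_natCast]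
    gcongr

lemma exists_cutoff (c ε : ℝ) (hc : 0 < c) (hε0 : 0 < ε) (hε1 : ε ≤ 1) :
    ∃ g g1 g2 : ℕ → ℝ → ℝ, ∃ C : ℝ, 0 ≤ C ∧
      (∀ n, ContDiff ℝ 2 (g n)) ∧ (∀ n r, HasDerivAt (g n) (g1 n r) r) ∧
      (∀ n r, HasDerivAt (g1 n) (g2 n r) r) ∧ (∀ n, Continuous (g2 n)) ∧
      (∀ (n : ℕ) (r : ℝ), 2 * ((n : ℝ) + 1) ≤ r → g n r = 0) ∧
      (∀ n r, |g n r| ≤ C * Real.exp (-ε * r)) ∧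
      (∀ n r, |g1 n r| ≤ C * Real.exp (-ε * r)) ∧
      (∀ n r, |g2 n r| ≤ C * Real.exp (-ε * r)) ∧
      (∀ r, Tendsto (fun n => g n r) atTop (nhds (c * Real.exp (-ε * r)))) ∧
      (∀ r, Tendsto (fun n => g1 n r) atTop (nhds (-ε * (c * Real.exp (-ε * r))))) ∧
      (∀ r, Tendsto (fun n => g2 n r) atTop (nhds (ε ^ 2 * (c * Real.exp (-ε * r))))) := by
  let χ : ContDiffBump (0 : ℝ) := ⟨1, 2, by norm_num, by norm_num⟩
  have hχ : ContDiff ℝ 4 χ := χ.contDiff (n := 4)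
  have hχ1 : ContDiff ℝ 3 (deriv χ) := ((contDiff_succ_iff_deriv (n := 3)).1 hχ).2.2
  have hχ2 : ContDiff ℝ 2 (deriv (deriv χ)) := ((contDiff_succ_iff_deriv (n := 2)).1 hχ1).2.2
  have hd : ∀ r, HasDerivAt χ (deriv χ r) r := fun r =>
    (hχ.differentiable (by norm_num) r).hasDerivAt
  have hd1 : ∀ r, HasDerivAt (deriv χ) (deriv (deriv χ) r) r := fun r =>
    (hχ1.differentiable (by norm_num) r).hasDerivAt
  have hs0 : HasCompactSupport χ := χ.hasCompactSupport
  obtain ⟨C1, hC1⟩ := hs0.deriv.exists_bound_of_continuous hχ1.continuous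
  obtain ⟨C2, hC2⟩ := hs0.deriv.deriv.exists_bound_of_continuous hχ2.continuous
  have hC1' : 0 ≤ C1 := (norm_nonneg _).trans (hC1 0)
  have hC2' : 0 ≤ C2 := (norm_nonneg _).trans (hC2 0)
  let a : ℕ → ℝ := fun n => 1 / ((n : ℝ) + 1)
  have ha0 : ∀ n, 0 < a n := fun n => by positivity
  have ha1 : ∀ n, a n ≤ 1 := fun n => by
    rw [div_le_one (by positivity)]
    linarith [(Nat.cast_nonneg n : (0 : ℝ) ≤ n)]
  have hal : Tendsto a atTop (nhds 0) := tendsto_one_div_add_atTop_nhds_zero_nat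
  have hlin : ∀ n r, HasDerivAt (fun r : ℝ => a n * r) (a n) r := fun n r => by
    simpa using (hasDerivAt_id r).const_mul (a n)
  have hE : ∀ r, HasDerivAt (fun r : ℝ => c * Real.exp (-ε * r)) (c * (Real.exp (-ε * r) * (-ε))) r :=
    fun r => by
      have h := ((hasDerivAt_id r).const_mul (-ε)).exp.const_mul c
      simpa using h
  have hx0 : ∀ n r, HasDerivAt (fun r : ℝ => χ (a n * r)) (deriv χ (a n * r) * a n) r := fun n r =>
    HasDerivAt.comp (h₂ := χ) r (hd _) (hlin n r)
  have hx1 : ∀ n r, HasDerivAt (fun r : ℝ => deriv χ (a n * r)) (deriv (deriv χ) (a n * r) * a n) r :=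
    fun n r => HasDerivAt.comp (h₂ := deriv χ) r (hd1 _) (hlin n r)
  have l0 : ∀ r : ℝ, Tendsto (fun n => χ (a n * r)) atTop (nhds 1) := fun r => by
    have h := (hχ.continuous.tendsto (0 * r)).comp (hal.mul_const r)
    have h1 : χ (0 * r) = 1 := χ.one_of_mem_closedBall (by simp [χ])
    rwa [h1] at h
  have l1 : ∀ r : ℝ, Tendsto (fun n => deriv χ (a n * r)) atTop (nhds (deriv χ (0 * r))) :=
    fun r => (hχ1.continuous.tendsto (0 * r)).comp (hal.mul_const r)
  have l2 : ∀ r : ℝ, Tendsto (fun n => deriv (deriv χ) (a n * r)) atTop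
      (nhds (deriv (deriv χ) (0 * r))) :=
    fun r => (hχ2.continuous.tendsto (0 * r)).comp (hal.mul_const r)
  have b0 : ∀ r, |χ r| ≤ 1 := fun r => by
    rw [abs_of_nonneg χ.nonneg]
    exact χ.le_one
  refine ⟨fun n r => c * Real.exp (-ε * r) * χ (a n * r),
    fun n r => c * Real.exp (-ε * r) * (-ε * χ (a n * r) + a n * deriv χ (a n * r)),
    fun n r => c * Real.exp (-ε * r) * (ε ^ 2 * χ (a n * r) - 2 * ε * a n * deriv χ (a n * r)
      + a n ^ 2 * deriv (deriv χ) (a n * r)), c * (1 + 2 * C1 + C2), by positivity,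
    ?_, ?_, ?_, ?_, ?_, ?_, ?_, ?_, ?_, ?_, ?_⟩
  · intro n
    have h2 : ContDiff ℝ 2 χ := hχ.of_le (by norm_num)
    exact (contDiff_const.mul (by fun_prop)).mul (h2.comp (by fun_prop))
  · intro n r
    refine ((hE r).mul (hx0 n r)).congr_deriv ?_
    ring
  · intro n r
    refine ((hE r).mul (((hx0 n r).const_mul (-ε)).add ((hx1 n r).const_mul (a n)))).congr_deriv ?_
    simp only [Pi.add_apply]
    ring
  · intro n
    have h0 := hχ.continuous
    have h1 := hχ1.continuous
    have h2 := hχ2.continuous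
    fun_prop
  · intro n r hr
    have : χ (a n * r) = 0 := by
      apply χ.zero_of_le_dist
      simp only [χ, dist_zero_right]
      refine le_trans ?_ (le_abs_self _)
      simp only [a]
      rw [one_div_mul_eq_div, le_div_iff₀ (by positivity)]
      exact hr
    simp [this]
  · intro n r
    rw [abs_mul, abs_of_pos (by positivity : 0 < c * Real.exp (-ε * r))]
    have := b0 (a n * r)
    calc c * Real.exp (-ε * r) * |χ (a n * r)| ≤ c * Real.exp (-ε * r) * (1 + 2 * C1 + C2) := by
          gcongr; linarith
      _ = _ := by ring
  · intro n r
    rw [abs_mul, abs_of_pos (by positivity : 0 < c * Real.exp (-ε * r))]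
    have h0 := b0 (a n * r)
    have h1 := hC1 (a n * r)
    rw [Real.norm_eq_abs] at h1
    have : |-ε * χ (a n * r) + a n * deriv χ (a n * r)| ≤ 1 + 2 * C1 + C2 := by
      refine (abs_add_le _ _).trans ?_
      rw [abs_mul, abs_mul, abs_neg, abs_of_pos hε0, abs_of_pos (ha0 n)]
      have i1 : ε * |χ (a n * r)| ≤ 1 * 1 := by gcongr
      have i2 : a n * |deriv χ (a n * r)| ≤ 1 * C1 := by
        have := ha1 n
        gcongr
      linarith
    calc _ ≤ c * Real.exp (-ε * r) * (1 + 2 * C1 + C2) := by gcongr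
      _ = _ := by ring
  · intro n r
    rw [abs_mul, abs_of_pos (by positivity : 0 < c * Real.exp (-ε * r))]
    have h0 := b0 (a n * r)
    have h1 := hC1 (a n * r)
    have h2 := hC2 (a n * r)
    have han := ha1 n
    have han0 := ha0 n
    rw [Real.norm_eq_abs] at h1 h2
    have : |ε ^ 2 * χ (a n * r) - 2 * ε * a n * deriv χ (a n * r)
      + a n ^ 2 * deriv (deriv χ) (a n * r)| ≤ 1 + 2 * C1 + C2 := by
      refine (abs_add_le _ _).trans ?_
      have h3 := abs_sub (ε ^ 2 * χ (a n * r)) (2 * ε * a n * deriv χ (a n * r))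
      rw [abs_mul, abs_mul, abs_of_pos (by positivity : 0 < ε ^ 2),
        abs_of_pos (by positivity : 0 < 2 * ε * a n)] at h3
      rw [abs_mul (a n ^ 2), abs_of_pos (by positivity : 0 < a n ^ 2)]
      have i1 : ε ^ 2 * |χ (a n * r)| ≤ 1 ^ 2 * 1 := by gcongr
      have i2 : 2 * ε * a n * |deriv χ (a n * r)| ≤ 2 * 1 * 1 * C1 := by gcongr
      have i3 : a n ^ 2 * |deriv (deriv χ) (a n * r)| ≤ 1 ^ 2 * C2 := by gcongr
      linarith
    calc _ ≤ c * Real.exp (-ε * r) * (1 + 2 * C1 + C2) := by gcongr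
      _ = _ := by ring
  · intro r
    have := (l0 r).const_mul (c * Real.exp (-ε * r))
    simpa using this
  · intro r
    have := (((l0 r).const_mul (-ε)).add (hal.mul (l1 r))).const_mul (c * Real.exp (-ε * r))
    convert this using 2
    ring
  · intro r
    have := ((((l0 r).const_mul (ε ^ 2)).sub ((hal.const_mul (2 * ε)).mul (l1 r))).add
      ((hal.pow 2).mul (l2 r))).const_mul (c * Real.exp (-ε * r))
    convert this using 2
    ring

section
variable {N k : ℕ}

lemma wint_continuous (v : Euc N × Euc k → ℝ → ℝ) (hv : Continuous (Function.uncurry v)) (M : ℝ)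
    (hM : ∀ z t, |v z t| ≤ M) (w : Euc N × Euc k → ℝ) (hw : Integrable w) :
    Continuous (fun t => ∫ z, v z t * w z) := by
  refine continuous_of_dominated (bound := fun z => M * |w z|) ?_ ?_ ?_ ?_
  · intro t
    exact (Continuous.aestronglyMeasurable (by fun_prop)).mul hw.1
  · intro t
    refine Eventually.of_forall fun z => ?_
    rw [norm_mul, Real.norm_eq_abs, Real.norm_eq_abs]
    exact mul_le_mul_of_nonneg_right (hM z t) (abs_nonneg _)
  · exact hw.abs.const_mul M
  · refine Eventually.of_forall fun z => ?_
    fun_prop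

lemma wint_integrable (v : Euc N × Euc k → ℝ → ℝ) (hv : Continuous (Function.uncurry v)) (M : ℝ)
    (hM : ∀ z t, |v z t| ≤ M) (w : Euc N × Euc k → ℝ) (hw : Integrable w) (t : ℝ) :
    Integrable (fun z => v z t * w z) := by
  refine hw.bdd_mul (c := M) (Continuous.aestronglyMeasurable (by fun_prop)) ?_
  exact Eventually.of_forall fun z => hM z t

lemma wint_limit (v : Euc N × Euc k → ℝ → ℝ) (hv : Continuous (Function.uncurry v)) (M : ℝ)
    (hM : ∀ z t, |v z t| ≤ M) (w : ℕ → Euc N × Euc k → ℝ) (w0 b : Euc N × Euc k → ℝ)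
    (hw : ∀ n, Continuous (w n)) (hb : Integrable b) (hwb : ∀ n z, |w n z| ≤ b z)
    (hl : ∀ z, Tendsto (fun n => w n z) atTop (nhds (w0 z))) (T : ℝ) (ψ : ℝ → ℝ)
    (hψ : Continuous ψ) :
    Tendsto (fun n => ∫ t in Set.Ioc (0 : ℝ) T, (∫ z, v z t * w n z) * ψ t) atTop
      (nhds (∫ t in Set.Ioc (0 : ℝ) T, (∫ z, v z t * w0 z) * ψ t)) := by
  have hwi : ∀ n, Integrable (w n) := fun n =>
    hb.mono' (hw n).aestronglyMeasurable (Eventually.of_forall fun z => hwb n z)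
  have hM0 : 0 ≤ M := (abs_nonneg _).trans (hM 0 0)
  refine tendsto_integral_of_dominated_convergence (fun t => M * (∫ z, b z) * |ψ t|) ?_ ?_ ?_ ?_
  · intro n
    exact ((wint_continuous v hv M hM _ (hwi n)).mul hψ).aestronglyMeasurable
  · exact (Continuous.integrableOn_Ioc (by fun_prop))
  · intro n
    refine Eventually.of_forall fun t => ?_
    rw [norm_mul, Real.norm_eq_abs (ψ t)]
    refine mul_le_mul_of_nonneg_right ?_ (abs_nonneg _)
    rw [← integral_const_mul]
    refine norm_integral_le_of_norm_le (hb.const_mul M) (Eventually.of_forall fun z => ?_)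
    rw [norm_mul]
    exact mul_le_mul (hM z t) (hwb n z) (norm_nonneg _) hM0
  · refine Eventually.of_forall fun t => ?_
    refine Tendsto.mul_const _ ?_
    refine tendsto_integral_of_dominated_convergence (fun z => M * b z) ?_ (hb.const_mul M) ?_ ?_
    · intro n
      exact Continuous.aestronglyMeasurable ((by fun_prop : Continuous fun z => v z t).mul (hw n))
    · intro n
      refine Eventually.of_forall fun z => ?_
      rw [norm_mul]
      exact mul_le_mul (hM z t) (hwb n z) (norm_nonneg _) hM0
    · refine Eventually.of_forall fun z => ?_
      exact (hl z).const_mul _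

end

lemma du_bois (T a : ℝ) (hT : 0 < T) (f H : ℝ → ℝ) (hf : Continuous f) (hH : Continuous H)
    (h : ∀ ψ : ℝ → ℝ, ContDiff ℝ 2 ψ → HasCompactSupport ψ → ψ T = 0 →
      -(ψ 0 * a) = (∫ t in Set.Ioc (0 : ℝ) T, H t * ψ t)
        + ∫ t in Set.Ioc (0 : ℝ) T, f t * deriv ψ t) :
    ∀ t ∈ Set.Icc 0 T, f t = a + ∫ s in (0 : ℝ)..t, H s := by
  set G : ℝ → ℝ := fun t => ∫ s in (0 : ℝ)..t, H s with hG
  have hGd : ∀ t, HasDerivAt G (H t) t := fun t =>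
    intervalIntegral.integral_hasDerivAt_right (hH.intervalIntegrable _ _)
      hH.stronglyMeasurable.stronglyMeasurableAtFilter hH.continuousAt
  have hGc : Continuous G := continuous_iff_continuousAt.2 fun t => (hGd t).continuousAt
  set w : ℝ → ℝ := fun t => f t - G t - a with hw
  have hwc : Continuous w := by fun_prop
  have key : ∀ g : ℝ → ℝ, ContDiff ℝ ((⊤ : ℕ∞) : WithTop ℕ∞) g → HasCompactSupport g →
      tsupport g ⊆ Set.Ioo 0 T → ∫ x, g x • w x = 0 := by
    intro g hg hgs hgt
    have hgc := hg.continuous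
    set P : ℝ → ℝ := fun t => ∫ s in T..t, g s with hP
    have hPd : ∀ t, HasDerivAt P (g t) t := fun t =>
      intervalIntegral.integral_hasDerivAt_right (hgc.intervalIntegrable _ _)
        hgc.stronglyMeasurable.stronglyMeasurableAtFilter hgc.continuousAt
    have hPdiff : ContDiff ℝ 2 P := by
      have : ContDiff ℝ (1 + 1) P := by
        rw [contDiff_succ_iff_deriv]
        refine ⟨fun t => (hPd t).differentiableAt, by simp, ?_⟩
        rw [show deriv P = g from funext fun t => (hPd t).deriv]
        exact hg.of_le (by exact_mod_cast le_top)
      exact this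
    let χ : ContDiffBump (0 : ℝ) := ⟨T + 1, T + 2, by linarith, by linarith⟩
    have hχ1 : ∀ t ∈ Set.Icc 0 T, χ t = 1 := fun t ht => χ.one_of_mem_closedBall (by
      simp only [χ, Metric.mem_closedBall, dist_zero_right, Real.norm_eq_abs]
      rw [abs_of_nonneg ht.1]; linarith [ht.2])
    have hχe : ∀ t ∈ Set.Icc 0 T, χ =ᶠ[nhds t] fun _ => (1 : ℝ) := fun t ht =>
      χ.eventuallyEq_one_of_mem_ball (by
      simp only [χ, Metric.mem_ball, dist_zero_right, Real.norm_eq_abs]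
      rw [abs_of_nonneg ht.1]; linarith [ht.2])
    have h1 := h (fun t => χ t * P t) ((χ.contDiff (n := 2)).mul hPdiff)
      (χ.hasCompactSupport.mul_right) (by simp [hP])
    have hPder : ∀ t ∈ Set.Icc 0 T, deriv (fun t => χ t * P t) t = g t := fun t ht => by
      have : (fun t => χ t * P t) =ᶠ[nhds t] P := by
        filter_upwards [hχe t ht] with s hs
        rw [hs, one_mul]
      rw [this.deriv_eq, (hPd t).deriv]
    have e1 : ∫ t in Set.Ioc (0 : ℝ) T, H t * (χ t * P t) = ∫ t in (0 : ℝ)..T, P t * H t := by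
      rw [intervalIntegral.integral_of_le hT.le]
      refine setIntegral_congr_fun measurableSet_Ioc fun t ht => ?_
      simp only [hχ1 t (Set.Ioc_subset_Icc_self ht)]
      ring
    have e2 : ∫ t in Set.Ioc (0 : ℝ) T, f t * deriv (fun t => χ t * P t) t
        = ∫ t in (0 : ℝ)..T, f t * g t := by
      rw [intervalIntegral.integral_of_le hT.le]
      refine setIntegral_congr_fun measurableSet_Ioc fun t ht => ?_
      simp only [hPder t (Set.Ioc_subset_Icc_self ht)]
    have e3 : ∫ t in (0 : ℝ)..T, P t * H t = - ∫ t in (0 : ℝ)..T, g t * G t := by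
      rw [intervalIntegral.integral_mul_deriv_eq_deriv_mul (fun t _ => hPd t) (fun t _ => hGd t)
        (hgc.intervalIntegrable _ _) (hH.intervalIntegrable _ _)]
      simp [hP, hG]
    have e4 : P 0 = - ∫ t in (0 : ℝ)..T, g t := by
      rw [hP]
      exact intervalIntegral.integral_symm _ _
    rw [e1, e2, e3, hχ1 0 ⟨le_rfl, hT.le⟩, one_mul, e4] at h1
    have e5 : ∫ x, g x • w x = ∫ t in (0 : ℝ)..T, g t * w t := by
      rw [intervalIntegral.integral_of_le hT.le]
      symm
      apply setIntegral_eq_integral_of_forall_compl_eq_zero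
      intro x hx
      have : g x = 0 := by
        by_contra hne
        exact hx (Set.Ioo_subset_Ioc_self (hgt (subset_tsupport g hne)))
      simp [this]
    rw [e5]
    have e6 : ∫ t in (0 : ℝ)..T, g t * w t = (∫ t in (0 : ℝ)..T, f t * g t)
        - (∫ t in (0 : ℝ)..T, g t * G t) - (∫ t in (0 : ℝ)..T, g t) * a := by
      rw [← intervalIntegral.integral_mul_const, ← intervalIntegral.integral_sub,
        ← intervalIntegral.integral_sub]
      · congr 1; funext t; simp only [hw]; ring
      all_goals exact Continuous.intervalIntegrable (by fun_prop) _ _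
    rw [e6]
    linarith
  have hae := isOpen_Ioo.ae_eq_zero_of_integral_contDiff_smul_eq_zero
    (hwc.locallyIntegrable.locallyIntegrableOn _) key
  have hio : Set.EqOn w (fun _ => 0) (Set.Ioo 0 T) := by
    refine Measure.eqOn_open_of_ae_eq (μ := volume) ?_ isOpen_Ioo hwc.continuousOn continuousOn_const
    rw [EventuallyEq, ae_restrict_iff' measurableSet_Ioo]
    exact hae
  have hic : Set.EqOn w (fun _ => 0) (Set.Icc 0 T) := by
    have := hio.closure hwc continuous_const
    rwa [closure_Ioo hT.ne] at this
  intro t ht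
  have := hic ht
  simp only [hw] at this
  linarith

lemma frac_scale (γ t : ℝ) (hγ : γ < 1) (ht : 0 ≤ t) (h : ℝ → ℝ) :
    ∫ s in Set.Ioc (0 : ℝ) t, (t - s) ^ (-γ) * h s =
      t ^ (1 - γ) * ∫ r in Set.Ioc (0 : ℝ) 1, (1 - r) ^ (-γ) * h (t * r) := by
  rcases ht.eq_or_lt with rfl | ht
  · simp [Real.zero_rpow (by linarith : 1 - γ ≠ 0)]
  · rw [← intervalIntegral.integral_of_le ht.le, ← intervalIntegral.integral_of_le zero_le_one]
    have h1 := intervalIntegral.integral_comp_mul_left (a := 0) (b := 1)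
      (fun s => (t - s) ^ (-γ) * h s) ht.ne'
    simp only [mul_zero, mul_one, smul_eq_mul] at h1
    have h2 : ∫ r in (0 : ℝ)..1, (t - t * r) ^ (-γ) * h (t * r)
        = t ^ (-γ) * ∫ r in (0 : ℝ)..1, (1 - r) ^ (-γ) * h (t * r) := by
      rw [← intervalIntegral.integral_const_mul]
      refine intervalIntegral.integral_congr fun r hr => ?_
      rw [Set.uIcc_of_le zero_le_one] at hr
      rw [show t - t * r = t * (1 - r) by ring, Real.mul_rpow ht.le (by linarith [hr.2])]
      ring
    rw [h2] at h1
    rw [show (1 - γ) = 1 + (-γ) by ring, Real.rpow_add ht, Real.rpow_one, mul_assoc, h1]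
    field_simp

lemma kernel_integrable (γ t : ℝ) (hγ : γ < 1) :
    IntegrableOn (fun s => (t - s) ^ (-γ)) (Set.Ioc 0 t) := by
  rcases le_total t 0 with h | h
  · simp [Set.Ioc_eq_empty_of_le h]
  · have := (intervalIntegral.intervalIntegrable_rpow' (a := t) (b := 0) (r := -γ) (by linarith)).comp_sub_left t
    simp only [sub_self, sub_zero] at this
    rwa [intervalIntegrable_iff_integrableOn_Ioc_of_le h] at this

lemma jensen {N k : ℕ} (p : ℝ) (hp : 1 < p) (Θ v : Euc N × Euc k → ℝ) (hΘ : ∀ z, 0 ≤ Θ z)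
    (hn : ∫ z, Θ z = 1) (hv : ∀ z, 0 ≤ v z)
    (hi : Integrable (fun z => v z * Θ z)) (hip : Integrable (fun z => v z ^ p * Θ z)) :
    (∫ z, v z * Θ z) ^ p ≤ ∫ z, v z ^ p * Θ z := by
  have hΘi : Integrable Θ := by
    by_contra hh
    rw [integral_undef hh] at hn
    norm_num at hn
  set m := ∫ z, v z * Θ z with hm
  have hm0 : 0 ≤ m := integral_nonneg fun z => mul_nonneg (hv z) (hΘ z)
  rcases hm0.eq_or_lt with h0 | h0
  · rw [← h0, Real.zero_rpow (by linarith)]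
    exact integral_nonneg fun z => mul_nonneg (Real.rpow_nonneg (hv z) _) (hΘ z)
  have hpt : ∀ z, m ^ p * ((1 - p) * Θ z + p / m * (v z * Θ z)) ≤ v z ^ p * Θ z := by
    intro z
    have hb := one_add_mul_self_le_rpow_one_add (s := v z / m - 1) (by
      have := div_nonneg (hv z) hm0
      linarith) hp.le
    rw [show 1 + (v z / m - 1) = v z / m by ring, Real.div_rpow (hv z) hm0,
      le_div_iff₀ (by positivity)] at hb
    calc _ = ((1 + p * (v z / m - 1)) * m ^ p) * Θ z := by ring
      _ ≤ _ := mul_le_mul_of_nonneg_right hb (hΘ z)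
  have hint : Integrable (fun z => (1 - p) * Θ z + p / m * (v z * Θ z)) :=
    (hΘi.const_mul _).add (hi.const_mul _)
  have := integral_mono (hint.const_mul (m ^ p)) hip hpt
  rw [integral_const_mul, integral_add (hΘi.const_mul _) (hi.const_mul _), integral_const_mul,
    integral_const_mul, hn, ← hm] at this
  have e : (1 - p) * 1 + p / m * m = 1 := by field_simp; ring
  rwa [e, mul_one] at this

lemma absPow_eq (p x : ℝ) (hp : 1 < p) (hx : 0 ≤ x) : absPow p x = x ^ p := by
  unfold absPow
  rw [abs_of_nonneg hx]
  rcases hx.eq_or_lt with rfl | hx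
  · simp [Real.zero_rpow (by linarith : p ≠ 0)]
  · rw [Real.rpow_sub_one hx.ne']
    field_simp

/-- The memory term, with time clamped to `[0,T]`. -/
def memV {N k : ℕ} (γ p T : ℝ) (v : Euc N × Euc k → ℝ → ℝ) (z : Euc N × Euc k) (t : ℝ) : ℝ :=
  (max 0 (min T t)) ^ (1 - γ) *
    ∫ r in Set.Ioc (0 : ℝ) 1, (1 - r) ^ (-γ) * v z (max 0 (min T t) * r) ^ p

lemma memV_bound {N k : ℕ} (γ p T M : ℝ) (hγ1 : γ < 1) (hp : 1 < p) (hT : 0 < T)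
    (v : Euc N × Euc k → ℝ → ℝ) (hv0 : ∀ z t, 0 ≤ v z t) (hM : ∀ z t, |v z t| ≤ M)
    (z : Euc N × Euc k) (t : ℝ) :
    |memV γ p T v z t| ≤ T ^ (1 - γ) * ∫ r in Set.Ioc (0 : ℝ) 1, (1 - r) ^ (-γ) * M ^ p := by
  have hk := kernel_integrable γ 1 hγ1
  unfold memV
  have hτ : max 0 (min T t) ≤ T := by simp [hT.le]
  have hτ0 : 0 ≤ max 0 (min T t) := le_max_left _ _
  rw [abs_mul, abs_of_nonneg (Real.rpow_nonneg hτ0 _)]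
  refine mul_le_mul (Real.rpow_le_rpow hτ0 hτ (by linarith)) ?_ (abs_nonneg _)
    (Real.rpow_nonneg hT.le _)
  rw [← Real.norm_eq_abs]
  refine norm_integral_le_of_norm_le (hk.mul_const (M ^ p)) ?_
  rw [ae_restrict_iff' measurableSet_Ioc]
  refine Eventually.of_forall fun r hr => ?_
  have h1 : 0 ≤ (1 - r) ^ (-γ) := Real.rpow_nonneg (by linarith [hr.2]) _
  have h2 := hv0 z (max 0 (min T t) * r)
  rw [Real.norm_of_nonneg (mul_nonneg h1 (Real.rpow_nonneg h2 _))]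
  have h3 := (le_abs_self _).trans (hM z (max 0 (min T t) * r))
  gcongr

lemma memV_continuous {N k : ℕ} (γ p T M : ℝ) (hγ1 : γ < 1) (hp : 1 < p)
    (v : Euc N × Euc k → ℝ → ℝ) (hv : Continuous (Function.uncurry v))
    (hv0 : ∀ z t, 0 ≤ v z t) (hM : ∀ z t, |v z t| ≤ M) :
    Continuous (Function.uncurry (memV γ p T v)) := by
  have hk := kernel_integrable γ 1 hγ1
  have hp0 : 0 ≤ p := by linarith
  unfold memV
  refine Continuous.mul ?_ ?_
  · exact Continuous.rpow_const (by fun_prop) fun _ => Or.inr (by linarith)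
  · refine continuous_of_dominated (bound := fun r => (1 - r) ^ (-γ) * M ^ p) ?_ ?_
      (hk.mul_const _) ?_
    · intro q
      refine hk.1.mul ?_
      exact (Continuous.rpow_const (by fun_prop) fun _ => Or.inr hp0).aestronglyMeasurable
    · intro q
      rw [ae_restrict_iff' measurableSet_Ioc]
      refine Eventually.of_forall fun r hr => ?_
      have h1 : 0 ≤ (1 - r) ^ (-γ) := Real.rpow_nonneg (by linarith [hr.2]) _
      have h2 := hv0 q.1 (max 0 (min T q.2) * r)
      rw [Real.norm_of_nonneg (mul_nonneg h1 (Real.rpow_nonneg h2 _))]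
      have h3 := (le_abs_self _).trans (hM q.1 (max 0 (min T q.2) * r))
      gcongr
    · refine Eventually.of_forall fun r => ?_
      refine continuous_const.mul ?_
      exact Continuous.rpow_const (by fun_prop) fun _ => Or.inr hp0

lemma memV_eq {N k : ℕ} (γ p T : ℝ) (hγ1 : γ < 1)
    (v : Euc N × Euc k → ℝ → ℝ) (z : Euc N × Euc k) (t : ℝ) (ht : t ∈ Set.Icc 0 T) :
    memV γ p T v z t = ∫ s in Set.Ioc (0 : ℝ) t, (t - s) ^ (-γ) * v z s ^ p := by
  rw [frac_scale γ t hγ1 ht.1]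
  unfold memV
  rw [min_eq_right ht.2, max_eq_right ht.1]

lemma memV_lower {N k : ℕ} (γ p T M : ℝ) (hγ1 : γ < 1) (hp : 1 < p)
    (v : Euc N × Euc k → ℝ → ℝ) (hv : Continuous (Function.uncurry v))
    (hv0 : ∀ z t, 0 ≤ v z t) (hM : ∀ z t, |v z t| ≤ M)
    (Θ : Euc N × Euc k → ℝ) (hΘ : ∀ z, 0 ≤ Θ z) (hn : ∫ z, Θ z = 1)
    (t : ℝ) (ht : t ∈ Set.Icc 0 T) :
    ∫ s in Set.Ioc (0 : ℝ) t, (t - s) ^ (-γ) * (∫ z, v z s * Θ z) ^ p ≤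
      ∫ z, memV γ p T v z t * Θ z := by
  have hΘi : Integrable Θ := by
    by_contra hh
    rw [integral_undef hh] at hn
    norm_num at hn
  have hp0 : 0 ≤ p := by linarith
  have hk := kernel_integrable γ t hγ1
  have hvp : Continuous (Function.uncurry fun z s => v z s ^ p) :=
    Continuous.rpow_const hv fun _ => Or.inr hp0
  have hMp : ∀ z s, |v z s ^ p| ≤ M ^ p := fun z s => by
    rw [abs_of_nonneg (Real.rpow_nonneg (hv0 z s) _)]
    exact Real.rpow_le_rpow (hv0 z s) ((le_abs_self _).trans (hM z s)) hp0
  have hI : Integrable (Function.uncurry fun (z : Euc N × Euc k) (s : ℝ) =>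
      (v z s ^ p) * (Θ z * (t - s) ^ (-γ))) (volume.prod (volume.restrict (Set.Ioc 0 t))) := by
    refine (hΘi.mul_prod hk).bdd_mul (c := M ^ p) hvp.aestronglyMeasurable ?_
    exact Eventually.of_forall fun q => hMp q.1 q.2
  have hsw := integral_integral_swap hI
  have e1 : ∫ z, memV γ p T v z t * Θ z =
      ∫ z, ∫ s in Set.Ioc 0 t, (v z s ^ p) * (Θ z * (t - s) ^ (-γ)) := by
    refine integral_congr_ae (Eventually.of_forall fun z => ?_)
    simp only
    rw [memV_eq γ p T hγ1 v z t ht, ← integral_mul_const]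
    congr 1
    funext s
    ring
  rw [e1, hsw]
  have e2 : ∀ s, ∫ z, (v z s ^ p) * (Θ z * (t - s) ^ (-γ)) =
      (t - s) ^ (-γ) * ∫ z, v z s ^ p * Θ z := fun s => by
    rw [← integral_const_mul]
    congr 1
    funext z
    ring
  simp_rw [e2]
  have hc1 := wint_continuous v hv M hM Θ hΘi
  have hc2 := wint_continuous _ hvp _ hMp Θ hΘi
  have hint : ∀ F : ℝ → ℝ, Continuous F →
      IntegrableOn (fun s => (t - s) ^ (-γ) * F s) (Set.Ioc 0 t) := by
    intro F hF
    obtain ⟨C, hC⟩ := isCompact_Icc.exists_bound_of_continuousOn (hF.continuousOn (s := Set.Icc 0 t))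
    refine Integrable.mul_bdd (c := C) hk hF.aestronglyMeasurable ?_
    rw [ae_restrict_iff' measurableSet_Ioc]
    exact Eventually.of_forall fun s hs => hC s (Set.Ioc_subset_Icc_self hs)
  refine setIntegral_mono_on (hint _ (hc1.rpow_const fun _ => Or.inr hp0)) (hint _ hc2)
    measurableSet_Ioc fun s hs => ?_
  refine mul_le_mul_of_nonneg_left ?_ (Real.rpow_nonneg (by linarith [hs.2]) _)
  exact jensen p hp Θ (fun z => v z s) hΘ hn (fun z => hv0 z s)
    (wint_integrable v hv M hM Θ hΘi s) (wint_integrable _ hvp _ hMp Θ hΘi s)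

/-- **Key integro-differential inequality for the weighted average.**
Let `0 ≤ γ < 1`, `p > 1`, `T > 0`, and let `Θ` be normalized so that `∫ Θ = 1`. If
`u ∈ C([0,T], C₀(ℝ^{N+k}))` is a nonnegative weak solution of the memory problem with
nonnegative datum `u0 ∈ C₀(ℝ^{N+k})`, then `f(t) = ∫ u(z,t) Θ(z) dz` is `C¹` on `[0,T]`
and satisfies `f'(t) + f(t) ≥ ∫_0^t (t−s)^{−γ} f(s)^p ds` on `[0,T]`. -/
theorem weighted_average_integro_differential_inequality (N k : ℕ) (hN : 1 ≤ N) (hk : 1 ≤ k)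
    (γ p T c : ℝ) (hγ0 : 0 ≤ γ) (hγ1 : γ < 1) (hp : 1 < p) (hT : 0 < T) (hc : 0 < c)
    (hΘnorm : (∫ z : Euc N × Euc k, Theta N k c z) = 1)
    (u0 : Euc N × Euc k → ℝ) (hu0c : Continuous u0)
    (hu0z : Tendsto u0 (cocompact (Euc N × Euc k)) (nhds 0))
    (hu0nn : ∀ z, 0 ≤ u0 z)
    (u : Euc N × Euc k → ℝ → ℝ)
    (hunn : ∀ z : Euc N × Euc k, ∀ t ∈ Set.Icc (0 : ℝ) T, 0 ≤ u z t)
    (hU : ∃ U : ℝ → ZeroAtInftyContinuousMap (Euc N × Euc k) ℝ,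
      ContinuousOn U (Set.Icc 0 T) ∧ ∀ t ∈ Set.Icc (0 : ℝ) T, ∀ z, U t z = u z t)
    (hsol : IsWeakSolutionMemory N k γ p T u0 u) :
    ContDiffOn ℝ 1 (fun t => ∫ z : Euc N × Euc k, u z t * Theta N k c z) (Set.Icc 0 T) ∧
    ∀ t ∈ Set.Icc (0 : ℝ) T,
      (∫ s in Set.Ioc (0 : ℝ) t,
          (t - s) ^ (-γ) * (∫ z : Euc N × Euc k, u z s * Theta N k c z) ^ p) ≤
        derivWithin (fun r => ∫ z : Euc N × Euc k, u z r * Theta N k c z) (Set.Icc 0 T) t +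
          (∫ z : Euc N × Euc k, u z t * Theta N k c z) := by
  obtain ⟨U, hUc, hUu⟩ := hU
  let v : Euc N × Euc k → ℝ → ℝ := fun z t => U (Set.projIcc 0 T hT.le t) z
  have hvu : ∀ t ∈ Set.Icc (0 : ℝ) T, ∀ z, u z t = v z t := fun t ht z => by
    simp only [v]
    rw [Set.projIcc_of_mem hT.le ht, hUu t ht z]
  have hv0 : ∀ z t, 0 ≤ v z t := fun z t => by
    have h := (Set.projIcc 0 T hT.le t).2
    simp only [v]
    rw [hUu _ h z]
    exact hunn z _ h
  obtain ⟨M, hM'⟩ := isCompact_Icc.exists_bound_of_continuousOn hUc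
  have hM : ∀ z t, |v z t| ≤ M := fun z t => by
    have h := (U (Set.projIcc 0 T hT.le t)).toBCF.norm_coe_le_norm z
    rw [ZeroAtInftyContinuousMap.norm_toBCF_eq_norm] at h
    exact h.trans (hM' _ (Set.projIcc 0 T hT.le t).2)
  have hU' : Continuous fun t => U (Set.projIcc 0 T hT.le t) :=
    hUc.domRestrict.comp continuous_projIcc
  have hv : Continuous (Function.uncurry v) := by
    have h1 : Continuous fun q : (Euc N × Euc k) × ℝ =>
        (U (Set.projIcc 0 T hT.le q.2)).toBCF :=
      (ZeroAtInftyContinuousMap.isometry_toBCF (α := Euc N × Euc k) (β := ℝ)).continuous.comp (hU'.comp continuous_snd)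
    exact h1.eval continuous_fst
  have hVc := memV_continuous γ p T M hγ1 hp v hv hv0 hM
  have hVb := memV_bound γ p T M hγ1 hp hT v hv0 hM
  set MV := T ^ (1 - γ) * ∫ r in Set.Ioc (0 : ℝ) 1, (1 - r) ^ (-γ) * M ^ p with hMV
  set ε : ℝ := 1 / (2 * ((N : ℝ) + 2) + k) with hεd
  have hε0 : 0 < ε := by positivity
  have hε1 : ε ≤ 1 := by
    rw [hεd, div_le_one (by positivity)]
    have : (0 : ℝ) ≤ N := by positivity
    have : (0 : ℝ) ≤ k := by positivity
    linarith
  have hΘe : ∀ z : Euc N × Euc k, Theta N k c z = c * Real.exp (-ε * rho z) := fun z => rfl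
  have hΘ0 : ∀ z : Euc N × Euc k, 0 ≤ Theta N k c z := fun z => by rw [hΘe]; positivity
  have hre := integrable_rho_exp (N := N) (k := k) ε hε0
  obtain ⟨g, g1, g2, C, hC0, hg, hgd, hgd1, hg2c, hgz, hgb, hg1b, hg2b, hgl, hg1l, hg2l⟩ :=
    exists_cutoff c ε hc hε0 hε1
  have hg1c : ∀ n, Continuous (g1 n) := fun n =>
    continuous_iff_continuousAt.2 fun r => (hgd1 n r).continuousAt
  have hcr := continuous_rho (N := N) (k := k)
  have hcA := continuous_coefA (N := N) (k := k)
  have hcB := continuous_coefB (N := N) (k := k)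
  let w : ℕ → Euc N × Euc k → ℝ := fun n z => g n (rho z)
  let d : ℕ → Euc N × Euc k → ℝ := fun n z => g2 n (rho z) * coefA z + g1 n (rho z) * coefB z
  let D : Euc N × Euc k → ℝ := fun z => ε ^ 2 * (c * Real.exp (-ε * rho z)) * coefA z
    + -ε * (c * Real.exp (-ε * rho z)) * coefB z
  let Q : ℝ := 2 * ((N : ℝ) + 2) + k
  have hQ0 : 4 ≤ Q := by
    have : (0 : ℝ) ≤ N := by positivity
    have : (0 : ℝ) ≤ k := by positivity
    simp only [Q]; linarith
  let b : Euc N × Euc k → ℝ := fun z => C * (4 + Q) * (rho z * Real.exp (-ε * rho z))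
  have hb : Integrable b := hre.const_mul _
  have hB : ∀ z : Euc N × Euc k, |coefB z| ≤ Q * rho z := fun z => by
    have h1 := coefB_le z
    have h2 := coefB_ge z
    have h3 := one_le_rho z
    have h4 : Q * 1 ≤ Q * rho z := by gcongr
    rw [abs_le]
    constructor <;> simp only [Q] at * <;> linarith
  have hwc : ∀ n, Continuous (w n) := fun n => (hg n).continuous.comp hcr
  have hdc : ∀ n, Continuous (d n) := fun n =>
    (((hg2c n).comp hcr).mul hcA).add (((hg1c n).comp hcr).mul hcB)
  have hwb : ∀ n z, |w n z| ≤ b z := fun n z => by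
    refine (hgb n (rho z)).trans ?_
    have h3 := one_le_rho z
    have h4 : 1 * 1 ≤ (4 + Q) * rho z := by gcongr; linarith
    calc C * Real.exp (-ε * rho z) = C * Real.exp (-ε * rho z) * (1 * 1) := by ring
      _ ≤ C * Real.exp (-ε * rho z) * ((4 + Q) * rho z) := by gcongr
      _ = _ := by simp only [b]; ring
  have hdb : ∀ n z, |d n z| ≤ b z := fun n z => by
    have h3 := one_le_rho z
    have h5 : |coefA z| ≤ 4 * rho z := by rw [abs_of_nonneg (coefA_nonneg z)]; exact coefA_le z
    calc |d n z| ≤ |g2 n (rho z) * coefA z| + |g1 n (rho z) * coefB z| := abs_add_le _ _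
      _ = |g2 n (rho z)| * |coefA z| + |g1 n (rho z)| * |coefB z| := by rw [abs_mul, abs_mul]
      _ ≤ (C * Real.exp (-ε * rho z)) * (4 * rho z) + (C * Real.exp (-ε * rho z)) * (Q * rho z) := by
        have i1 := hg2b n (rho z)
        have i2 := hg1b n (rho z)
        have i3 := hB z
        gcongr
      _ = _ := by simp only [b]; ring
  have hwl : ∀ z, Tendsto (fun n => w n z) atTop (nhds (Theta N k c z)) := fun z => hgl (rho z)
  have hdl : ∀ z, Tendsto (fun n => d n z) atTop (nhds (D z)) := fun z =>
    ((hg2l (rho z)).mul_const _).add ((hg1l (rho z)).mul_const _)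
  have hΘi : Integrable (Theta N k c) := by
    by_contra hh
    rw [integral_undef hh] at hΘnorm
    norm_num at hΘnorm
  have hDi : Integrable D := by
    refine hb.mono' (Continuous.aestronglyMeasurable (by fun_prop))
      (Eventually.of_forall fun z => ?_)
    exact le_of_tendsto (hdl z).norm (Eventually.of_forall fun n => hdb n z)
  -- limit of the initial data term
  have hu0l : Tendsto (fun n => ∫ z, u0 z * w n z) atTop (nhds (∫ z, u0 z * Theta N k c z)) := by
    let W : ZeroAtInftyContinuousMap (Euc N × Euc k) ℝ := ⟨⟨u0, hu0c⟩, hu0z⟩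
    have hW : ∀ z, ‖u0 z‖ ≤ ‖W.toBCF‖ := fun z => W.toBCF.norm_coe_le_norm z
    refine tendsto_integral_of_dominated_convergence (fun z => ‖W.toBCF‖ * b z) ?_
      (hb.const_mul _) ?_ ?_
    · exact fun n => (hu0c.mul (hwc n)).aestronglyMeasurable
    · intro n
      refine Eventually.of_forall fun z => ?_
      rw [norm_mul]
      exact mul_le_mul (hW z) (hwb n z) (norm_nonneg _) (norm_nonneg _)
    · exact Eventually.of_forall fun z => (hwl z).const_mul _
  let f : ℝ → ℝ := fun t => ∫ z, v z t * Theta N k c z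
  let H : ℝ → ℝ := fun t => (∫ z, memV γ p T v z t * Theta N k c z) + ∫ z, v z t * D z
  have hfc : Continuous f := wint_continuous v hv M hM _ hΘi
  have hH1 : Continuous fun t => ∫ z, memV γ p T v z t * Theta N k c z :=
    wint_continuous _ hVc MV hVb _ hΘi
  have hH2 : Continuous fun t => ∫ z, v z t * D z := wint_continuous v hv M hM _ hDi
  have hHc : Continuous H := hH1.add hH2
  have hmem : ∀ t ∈ Set.Icc 0 T, ∀ z, Real.Gamma (1 - γ) *
      fracInt (1 - γ) (fun s => absPow p (u z s)) t = memV γ p T v z t := by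
    intro t ht z
    rw [memV_eq γ p T hγ1 v z t ht]
    unfold fracInt
    have hG : Real.Gamma (1 - γ) ≠ 0 := (Real.Gamma_pos_of_pos (by linarith)).ne'
    rw [← mul_assoc, mul_one_div_cancel hG, one_mul]
    refine setIntegral_congr_fun measurableSet_Ioc fun s hs => ?_
    have hs' : s ∈ Set.Icc 0 T := ⟨hs.1.le, hs.2.trans ht.2⟩
    simp only
    rw [hvu s hs' z, absPow_eq p _ hp (hv0 z s)]
    congr 2
    ring
  have hweak : ∀ ψ : ℝ → ℝ, ContDiff ℝ 2 ψ → HasCompactSupport ψ → ψ T = 0 →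
      -(ψ 0 * ∫ z, u0 z * Theta N k c z) = (∫ t in Set.Ioc (0 : ℝ) T, H t * ψ t)
        + ∫ t in Set.Ioc (0 : ℝ) T, f t * deriv ψ t := by
    intro ψ hψ hψs hψT
    have hψc := hψ.continuous
    have hψ'c : Continuous (deriv ψ) := hψ.continuous_deriv (by norm_num)
    have hn : ∀ n, -(ψ 0 * ∫ z, u0 z * w n z) =
        (∫ t in Set.Ioc (0 : ℝ) T, (∫ z, memV γ p T v z t * w n z) * ψ t) +
        (∫ t in Set.Ioc (0 : ℝ) T, (∫ z, v z t * d n z) * ψ t) +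
        ∫ t in Set.Ioc (0 : ℝ) T, (∫ z, v z t * w n z) * deriv ψ t := by
      intro n
      have h := hsol.2 (fun z t => g n (rho z) * ψ t) ?_ ?_ ?_
      · have e0 : (∫ z, u z T * (g n (rho z) * ψ T)) = 0 := by simp [hψT]
        have e1 : (∫ z, u0 z * (g n (rho z) * ψ 0)) = ψ 0 * ∫ z, u0 z * w n z := by
          rw [← integral_const_mul]
          congr 1
          funext z
          simp only [w]
          ring
        have e2 : Real.Gamma (1 - γ) * (∫ t in Set.Ioc (0 : ℝ) T, ∫ z,
            fracInt (1 - γ) (fun s => absPow p (u z s)) t * (g n (rho z) * ψ t)) =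
            ∫ t in Set.Ioc (0 : ℝ) T, (∫ z, memV γ p T v z t * w n z) * ψ t := by
          rw [← integral_const_mul]
          refine setIntegral_congr_fun measurableSet_Ioc fun t ht => ?_
          rw [← integral_const_mul, ← integral_mul_const]
          congr 1
          funext z
          rw [← hmem t (Set.Ioc_subset_Icc_self ht) z]
          simp only [w]
          ring
        have e3 : (∫ t in Set.Ioc (0 : ℝ) T, ∫ z,
            u z t * grushin (fun w => g n (rho w) * ψ t) z) =
            ∫ t in Set.Ioc (0 : ℝ) T, (∫ z, v z t * d n z) * ψ t := by
          refine setIntegral_congr_fun measurableSet_Ioc fun t ht => ?_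
          rw [← integral_mul_const]
          congr 1
          funext z
          rw [grushin_radial (fun r => g n r * ψ t) (fun r => g1 n r * ψ t) (fun r => g2 n r * ψ t)
            (fun r => (hgd n r).mul_const _) (fun r => (hgd1 n r).mul_const _),
            hvu t (Set.Ioc_subset_Icc_self ht) z]
          simp only [d]
          ring
        have e4 : (∫ t in Set.Ioc (0 : ℝ) T, ∫ z,
            u z t * deriv (fun t => g n (rho z) * ψ t) t) =
            ∫ t in Set.Ioc (0 : ℝ) T, (∫ z, v z t * w n z) * deriv ψ t := by
          refine setIntegral_congr_fun measurableSet_Ioc fun t ht => ?_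
          rw [← integral_mul_const]
          congr 1
          funext z
          rw [hvu t (Set.Ioc_subset_Icc_self ht) z,
            deriv_const_mul _ (hψ.differentiable (by norm_num) t)]
          simp only [w]
          ring
        rw [e0, e1, e2, e3, e4, zero_sub] at h
        exact h
      · have h1 : ContDiff ℝ 2 (fun q : (Euc N × Euc k) × ℝ => g n (rho q.1)) :=
          (hg n).comp ((contDiff_rho (n := 2)).comp contDiff_fst)
        exact h1.mul (hψ.comp contDiff_snd)
      · refine HasCompactSupport.intro
          ((isCompact_closedBall (0 : Euc N × Euc k) (2 * ((n : ℝ) + 1))).prod hψs) ?_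
        intro q hq
        by_cases h1 : q.1 ∈ Metric.closedBall (0 : Euc N × Euc k) (2 * ((n : ℝ) + 1))
        · have h2 : q.2 ∉ tsupport ψ := fun h2 => hq ⟨h1, h2⟩
          simp [image_eq_zero_of_notMem_tsupport h2]
        · rw [Metric.mem_closedBall, dist_zero_right, not_le] at h1
          have := hgz n (rho q.1) (h1.le.trans (norm_le_rho q.1))
          simp [this]
      · intro z
        simp [hψT]
    have hL : Tendsto (fun n => -(ψ 0 * ∫ z, u0 z * w n z)) atTop
        (nhds (-(ψ 0 * ∫ z, u0 z * Theta N k c z))) := (hu0l.const_mul _).neg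
    have hR := ((wint_limit (memV γ p T v) hVc MV hVb w _ b hwc hb hwb hwl T ψ hψc).add
      (wint_limit v hv M hM d D b hdc hb hdb hdl T ψ hψc)).add
      (wint_limit v hv M hM w _ b hwc hb hwb hwl T (deriv ψ) hψ'c)
    have := tendsto_nhds_unique hL (hR.congr fun n => (hn n).symm)
    rw [this]
    congr 1
    rw [← integral_add]
    · congr 1
      funext t
      simp only [H]
      ring
    · exact (hH1.mul hψc).integrableOn_Ioc
    · exact (hH2.mul hψc).integrableOn_Ioc
  have hrep := du_bois T _ hT f H hfc hHc hweak
  set a := ∫ z, u0 z * Theta N k c z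
  have hfu : ∀ t ∈ Set.Icc 0 T, (∫ z, u z t * Theta N k c z) = f t := fun t ht => by
    simp only [f]
    congr 1
    funext z
    rw [hvu t ht z]
  have hder : ∀ t ∈ Set.Icc 0 T, HasDerivWithinAt (fun t => ∫ z, u z t * Theta N k c z) (H t)
      (Set.Icc 0 T) t := by
    intro t ht
    have h1 : HasDerivAt (fun t => a + ∫ s in (0 : ℝ)..t, H s) (H t) t :=
      (intervalIntegral.integral_hasDerivAt_right (hHc.intervalIntegrable _ _)
        hHc.stronglyMeasurable.stronglyMeasurableAtFilter hHc.continuousAt).const_add a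
    exact h1.hasDerivWithinAt.congr (fun s hs => (hfu s hs).trans (hrep s hs))
      ((hfu t ht).trans (hrep t ht))
  have hud := uniqueDiffOn_Icc hT
  have hdw : ∀ t ∈ Set.Icc 0 T, derivWithin (fun t => ∫ z, u z t * Theta N k c z)
      (Set.Icc 0 T) t = H t := fun t ht => (hder t ht).derivWithin (hud t ht)
  refine ⟨?_, ?_⟩
  · rw [contDiffOn_one_iff_derivWithin hud]
    exact ⟨fun t ht => (hder t ht).differentiableWithinAt, hHc.continuousOn.congr hdw⟩
  · intro t ht
    rw [hdw t ht, hfu t ht]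
    have e1 : (∫ s in Set.Ioc (0 : ℝ) t, (t - s) ^ (-γ) * (∫ z, u z s * Theta N k c z) ^ p)
        = ∫ s in Set.Ioc (0 : ℝ) t, (t - s) ^ (-γ) * (∫ z, v z s * Theta N k c z) ^ p := by
      refine setIntegral_congr_fun measurableSet_Ioc fun s hs => ?_
      rw [hfu s ⟨hs.1.le, hs.2.trans ht.2⟩]
    rw [e1]
    have hlow := memV_lower γ p T M hγ1 hp v hv hv0 hM _ hΘ0 hΘnorm t ht
    have hpos : 0 ≤ (∫ z, v z t * D z) + f t := by
      simp only [f]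
      rw [← integral_add (wint_integrable v hv M hM D hDi t) (wint_integrable v hv M hM _ hΘi t)]
      refine integral_nonneg fun z => ?_
      simp only [Pi.zero_apply]
      rw [← mul_add]
      refine mul_nonneg (hv0 z t) ?_
      rw [hΘe]
      simp only [D]
      have h1 : ε * coefB z ≤ 1 := by
        calc ε * coefB z ≤ ε * (2 * ((N : ℝ) + 2) + k) := by
              have := coefB_le z
              gcongr
          _ = 1 := by
            rw [hεd]
            field_simp
      have h2 := coefA_nonneg z
      have h3 : 0 < c * Real.exp (-ε * rho z) := by positivity
      have : 0 ≤ (c * Real.exp (-ε * rho z)) * (ε ^ 2 * coefA z + (1 - ε * coefB z)) := by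
        apply mul_nonneg h3.le
        have : 0 ≤ ε ^ 2 * coefA z := by positivity
        linarith
      linarith
    simp only [H]
    linarith
end
end
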